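/- arXiv:math/0203065 — 5 statements merged into one kernel-verified Lean document; each statement's English description precedes it below -/
import Mathlib

section
/- Every continuum of weight at most ℵ₁ is a continuous image of the Čech–Stone remainder H* of the half line H = [0,∞). That is, for every nonempty compact connected Hausdorff space K that admits a base for its topology of cardinality at most ℵ₁, there exists a continuous surjection from H* onto K. -/
open Set Topology Function

noncomputable section

/-- The half line `H = [0,∞)` as a topological space. -/
abbrev HalfLine : Type := ↥(Set.Ici (0 : ℝ))

/-- The Čech–Stone remainder `H* = βH ∖ H` of the half line. -/
def HalfLineStar : Set (StoneCech HalfLine) :=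
  (Set.range (stoneCechUnit : HalfLine → StoneCech HalfLine))ᶜ
open FirstOrder Filter

theorem countable_formula {L : FirstOrder.Language.{0,0}} [Countable L.Symbols] (n : ℕ) :
    Countable (L.Formula (Fin n)) := by
  have h := FirstOrder.Language.BoundedFormula.card_le (L := L) (α := Fin n)
  have h2 : L.card ≤ Cardinal.aleph0 := by
    have : Cardinal.mk L.Symbols ≤ Cardinal.aleph0 := Cardinal.mk_le_aleph0_iff.2 inferInstance
    exact this
  have h3 : Cardinal.mk (Σ m, L.BoundedFormula (Fin n) m) ≤ Cardinal.aleph0 := by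
    refine h.trans ?_
    refine max_le le_rfl ?_
    simp only [Cardinal.lift_id]
    exact Cardinal.add_le_aleph0.2 ⟨Cardinal.mk_le_aleph0_iff.2 inferInstance, h2⟩
  have h4 : Countable (Σ m, L.BoundedFormula (Fin n) m) := Cardinal.mk_le_aleph0_iff.1 h3
  exact Function.Injective.countable (f := fun φ : L.Formula (Fin n) =>
    (⟨0, φ⟩ : Σ m, L.BoundedFormula (Fin n) m)) (fun a b hab => by simpa using hab)

/-- Diagonalisation over countably many eventually solvable conditions. -/
theorem diag {M T : Type*} [Nonempty M] [Countable T] (Q : T → ℕ → M → Prop)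
    (h : ∀ F : Finset T, ∀ᶠ n in atTop, ∃ z, ∀ t ∈ F, Q t n z) :
    ∃ z : ℕ → M, ∀ t, ∀ᶠ n in atTop, Q t n (z n) := by
  classical
  rcases isEmpty_or_nonempty T with hT | hT
  · exact ⟨fun _ => Classical.arbitrary M, fun t => (hT.false t).elim⟩
  obtain ⟨e, he⟩ := exists_surjective_nat T
  let P : ℕ → ℕ → Prop := fun n k => ∃ z, ∀ i < k, Q (e i) n z
  have hP : ∀ n, P n (Nat.findGreatest (P n) n) := by
    intro n
    apply Nat.findGreatest_spec (m := 0) (Nat.zero_le _)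
    exact ⟨Classical.arbitrary M, fun i hi => absurd hi (by omega)⟩
  choose z hz using hP
  refine ⟨z, fun t => ?_⟩
  obtain ⟨i, rfl⟩ := he t
  have := h ((Finset.range (i+1)).image e)
  filter_upwards [this, eventually_ge_atTop (i+1)] with n hn hni
  apply hz
  have : P n (i+1) := by
    obtain ⟨w, hw⟩ := hn
    exact ⟨w, fun k hk => hw _ (Finset.mem_image_of_mem _ (by simpa using hk))⟩
  have := Nat.le_findGreatest hni this
  omega

universe u
section sat
variable {L : FirstOrder.Language.{0,0}} {M : Type} [L.Structure M] {ι : Type u} {J : Type*}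

/-- Transfer of truth at a finite tuple. -/
def Tr (l : Filter J) (b : ι → J → M) (x : ι → ℕ → M) (V : Type u) (φ : L.Formula V) (s : V → ι) :
    Prop :=
  (∀ᶠ j in l, φ.Realize (fun v => b (s v) j)) → ∀ᶠ n in atTop, φ.Realize (fun v => x (s v) n)

theorem sat_step [Countable L.Symbols] [Nonempty M] [LinearOrder ι] (α : ι)
    (hc : (Iio α).Countable) (l : Filter J) (b : ι → J → M) (x : ι → ℕ → M)
    (hx : ∀ (V : Type u) [Finite V] (φ : L.Formula V) (s : V → ι), (∀ v, s v < α) → Tr l b x V φ s) :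
    ∃ z : ℕ → M, ∀ (V : Type u) [Finite V] (φ : L.Formula V) (s : V → ι), (∀ v, s v ≤ α) →
      Tr l b (fun i n => if i < α then x i n else z n) V φ s := by
  classical
  have hc' : Countable (Iic α) := by
    have : (Iic α).Countable := by
      rw [← Iio_union_right]; exact hc.union (countable_singleton _)
    exact this.to_subtype
  have := fun n => countable_formula (L := L) n
  let T := {t : Σ n, L.Formula (Fin n) × (Fin n → Iic α) //
    ∀ᶠ j in l, t.2.1.Realize (fun v => b (t.2.2 v) j)}
  let Q : T → ℕ → M → Prop := fun t n z =>
    t.1.2.1.Realize (fun v => if (t.1.2.2 v : ι) < α then x (t.1.2.2 v) n else z)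
  obtain ⟨z, hz⟩ := diag Q (by
    intro F
    let V := {p : Σ t : F, Fin t.1.1.1 // (p.1.1.1.2.2 p.2 : ι) < α}
    let ψ : F → L.Formula (V ⊕ Unit) := fun t => t.1.1.2.1.relabel
      (fun v => if h : (t.1.1.2.2 v : ι) < α then Sum.inl ⟨⟨t, v⟩, h⟩ else Sum.inr ())
    let χ : L.Formula V := FirstOrder.Language.Formula.iExs Unit (FirstOrder.Language.Formula.iInf ψ)
    have key := hx V χ (fun p => (p.1.1.1.1.2.2 p.1.2 : ι)) (fun p => p.2)
    have key2 := key (by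
      have h1 : ∀ᶠ j in l, ∀ t : F, t.1.1.2.1.Realize (fun v => b (t.1.1.2.2 v) j) := by
        rw [eventually_all]
        intro t
        exact t.1.2
      filter_upwards [h1] with j hj
      rw [FirstOrder.Language.Formula.realize_iExs]
      refine ⟨fun _ => b α j, ?_⟩
      rw [FirstOrder.Language.Formula.realize_iInf]
      intro t
      rw [FirstOrder.Language.Formula.realize_relabel]
      convert hj t using 1
      funext v
      simp only [Function.comp]
      split_ifs with h
      · rfl
      · have : (t.1.1.2.2 v : ι) = α := le_antisymm (t.1.1.2.2 v).2 (not_lt.1 h)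
        simp [this])
    filter_upwards [key2] with n hn
    rw [FirstOrder.Language.Formula.realize_iExs] at hn
    obtain ⟨z, hz⟩ := hn
    rw [FirstOrder.Language.Formula.realize_iInf] at hz
    refine ⟨z (), fun t ht => ?_⟩
    have := hz ⟨t, ht⟩
    rw [FirstOrder.Language.Formula.realize_relabel] at this
    convert this using 1
    funext v
    simp only [Function.comp]
    split_ifs with h
    · rfl
    · rfl)
  refine ⟨z, ?_⟩
  intro V _ φ s hs hφ
  obtain ⟨n, ⟨e⟩⟩ := Finite.exists_equiv_fin V
  have := hz ⟨⟨n, φ.relabel e, fun k => ⟨s (e.symm k), hs _⟩⟩, by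
    filter_upwards [hφ] with j hj
    rw [FirstOrder.Language.Formula.realize_relabel]
    convert hj using 1
    funext v
    simp⟩
  filter_upwards [this] with m hm
  simp only [Q] at hm
  rw [FirstOrder.Language.Formula.realize_relabel] at hm
  convert hm using 1
  funext v
  simp

theorem sat [Countable L.Symbols] [Nonempty M] [LinearOrder ι] [WellFoundedLT ι]
    (hc : ∀ α : ι, (Iio α).Countable) (l : Filter J) [l.NeBot] (b : ι → J → M) :
    ∃ x : ι → ℕ → M, ∀ (V : Type u) [Finite V] (φ : L.Formula V) (s : V → ι), Tr l b x V φ s := by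
  classical
  let R : (α : ι) → ((β : ι) → β < α → ℕ → M) → (ℕ → M) → Prop := fun α y z =>
    ∀ (V : Type u) [Finite V] (φ : L.Formula V) (s : V → ι), (∀ v, s v ≤ α) →
      Tr l b (fun i n => if h : i < α then y i h n else z n) V φ s
  let x : ι → ℕ → M := wellFounded_lt.fix (fun α y => Classical.epsilon (R α y))
  have hxe : ∀ α, x α = Classical.epsilon (R α (fun β _ => x β)) := fun α =>
    wellFounded_lt.fix_eq _ α
  have main : ∀ α : ι, ∀ (V : Type u) [Finite V] (φ : L.Formula V) (s : V → ι), (∀ v, s v ≤ α) →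
      Tr l b x V φ s := by
    intro α
    induction α using WellFoundedLT.induction with
    | ind α ih =>
    have hex : ∃ z, R α (fun β _ => x β) z := by
      obtain ⟨z, hz⟩ := sat_step (L := L) α (hc α) l b x (by
        intro V _ φ s hs
        rcases isEmpty_or_nonempty V with hV | hV
        · intro h
          obtain ⟨j, hj⟩ := h.exists
          refine Eventually.of_forall fun n => ?_
          convert hj using 1
        · obtain ⟨v, hv⟩ := Finite.exists_max s
          exact ih (s v) (hs v) V φ s hv)
      refine ⟨z, ?_⟩
      intro V _ φ s hs
      have := hz V φ s hs
      simpa only [dite_eq_ite] using this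
    have hR : R α (fun β _ => x β) (x α) := by
      rw [hxe α]; exact Classical.epsilon_spec hex
    intro V _ φ s hs hφ
    filter_upwards [hR V φ s hs hφ] with n hn
    convert hn using 1
    funext v
    split_ifs with h
    · rfl
    · rw [le_antisymm (hs v) (not_lt.1 h)]
  refine ⟨x, ?_⟩
  intro V _ φ s
  rcases isEmpty_or_nonempty V with hV | hV
  · intro h
    obtain ⟨j, hj⟩ := h.exists
    refine Eventually.of_forall fun n => ?_
    convert hj using 1
  · obtain ⟨v, hv⟩ := Finite.exists_max s
    exact main (s v) V φ s hv
end sat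

/-- Loops at zero: continuous functions on the line supported in the unit interval, bounded by one. -/
def Lp : Type := {f : ℝ → ℝ // Continuous f ∧ (∀ t, t ≤ 0 → f t = 0) ∧ (∀ t, 1 ≤ t → f t = 0) ∧
  ∀ t, |f t| ≤ 1}

instance : Inhabited Lp := ⟨⟨fun _ => 0, continuous_const, fun _ _ => rfl, fun _ _ => rfl,
  fun _ => by simp⟩⟩

/-- The language of rational boxes. -/
def LB : FirstOrder.Language.{0,0} := ⟨fun _ => Empty, fun n => Fin n → ℚ × ℚ⟩

instance : Countable LB.Symbols := by
  have h1 : ∀ n, Countable (LB.Functions n) := fun n => inferInstanceAs (Countable Empty)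
  have h2 : ∀ n, Countable (LB.Relations n) := fun n => inferInstanceAs (Countable (Fin n → ℚ × ℚ))
  unfold FirstOrder.Language.Symbols
  infer_instance

instance : LB.Structure Lp where
  funMap := fun {_} f _ => Empty.elim f
  RelMap := fun {n} (r : Fin n → ℚ × ℚ) v =>
    ∃ t, ∀ i, ((r i).1 : ℝ) < (v i).1 t ∧ (v i).1 t < ((r i).2 : ℝ)

theorem exists_box_formula {V : Type*} [Finite V] (a : V → ℚ × ℚ) :
    ∃ φ : LB.Formula V, ∀ v : V → Lp, φ.Realize v ↔
      ∃ t, ∀ i, ((a i).1 : ℝ) < (v i).1 t ∧ (v i).1 t < ((a i).2 : ℝ) := by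
  obtain ⟨n, ⟨e⟩⟩ := Finite.exists_equiv_fin V
  let r : LB.Relations n := fun k : Fin n => a (e.symm k)
  refine ⟨r.formula (fun k => FirstOrder.Language.Term.var (e.symm k)), fun v => ?_⟩
  rw [FirstOrder.Language.Formula.realize_rel]
  change (∃ t, ∀ k : Fin n, ((a (e.symm k)).1 : ℝ) < (v (e.symm k)).1 t ∧
    (v (e.symm k)).1 t < ((a (e.symm k)).2 : ℝ)) ↔ _
  refine exists_congr fun t => ?_
  exact e.symm.forall_congr_left (p := fun k => ((a (e.symm k)).1 : ℝ) < (v (e.symm k)).1 t ∧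
    (v (e.symm k)).1 t < ((a (e.symm k)).2 : ℝ)) |>.trans (by simp)

theorem approx {K : Type*} [TopologicalSpace K] [CompactSpace K] [ConnectedSpace K] {F : Type*}
    [Fintype F] (g : F → C(K, ℝ)) (p : K) (hp : ∀ i, g i p = 0) (hb : ∀ i x, |g i x| ≤ 1)
    (ε : ℝ) (hε : 0 < ε) :
    ∃ f : F → Lp, (∀ t, ∃ k, ∀ i, |(f i).1 t - g i k| < ε) ∧
      (∀ k, ∃ t, ∀ i, |(f i).1 t - g i k| < ε) := by
  let G : K → (F → ℝ) := fun k i => g i k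
  have hG : Continuous G := by fun_prop
  let C := range G
  have hCc : IsCompact C := isCompact_range hG
  have hCn : IsConnected C := isConnected_range hG
  have h0 : (0 : F → ℝ) ∈ C := ⟨p, by funext i; exact hp i⟩
  have hT : IsConnected (Metric.thickening ε C) := by
    have h1 : Metric.thickening ε C = (fun q : (F → ℝ) × (F → ℝ) => q.1 + q.2) ''
        (C ×ˢ Metric.ball 0 ε) := by
      ext y
      rw [Metric.mem_thickening_iff]
      constructor
      · rintro ⟨c, hc, hyc⟩
        exact ⟨(c, y - c), ⟨hc, by simpa [dist_eq_norm] using hyc⟩, by simp⟩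
      · rintro ⟨⟨c, d⟩, ⟨hc, hd⟩, rfl⟩
        exact ⟨c, hc, by simpa [dist_eq_norm] using hd⟩
    rw [h1]
    refine (hCn.prod ?_).image _ (by fun_prop)
    exact (convex_ball (0 : F → ℝ) ε).isConnected ⟨0, by simpa using hε⟩
  have hP : IsPathConnected (Metric.thickening ε C) :=
    (Metric.isOpen_thickening.isConnected_iff_isPathConnected).1 hT
  obtain ⟨S, hSC, hSf, hS⟩ := hCc.totallyBounded.exists_subset (Metric.dist_mem_uniformity hε)
  obtain ⟨n, e, he⟩ := hSf.fin_param
  have hsub : C ⊆ Metric.thickening ε C := Metric.self_subset_thickening hε C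
  let q : Fin (n + 1 + 1) → (F → ℝ) := Fin.snoc (Fin.cons 0 e : Fin (n+1) → (F → ℝ)) 0
  have hq : ∀ i, q i ∈ Metric.thickening ε C := by
    intro i
    apply hsub
    refine Fin.lastCases ?_ (fun j => ?_) i
    · simpa [q] using h0
    · refine Fin.cases ?_ (fun m => ?_) j
      · simpa [q] using h0
      · simp only [q, Fin.snoc_castSucc, Fin.cons_succ]
        exact hSC (by rw [← he.2]; exact mem_range_self m)
  obtain ⟨γ, hγ1, hγ2⟩ := hP.exists_path_through_family q hq
  have hq0 : q 0 = 0 := by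
    have : (0 : Fin (n+1+1)) = Fin.castSucc 0 := rfl
    simp only [q]; rw [this, Fin.snoc_castSucc, Fin.cons_zero]
  have hql : q (Fin.last _) = 0 := by simp [q]
  let cl : ℝ → ℝ := fun s => max (-1) (min 1 s)
  have hcl : Continuous cl := by fun_prop
  have hcl0 : cl 0 = 0 := by simp [cl]
  have hcl1 : ∀ s, |cl s| ≤ 1 := fun s => by
    rw [abs_le]; constructor
    · exact le_max_left _ _
    · exact max_le (by norm_num) (min_le_left _ _)
  have hcld : ∀ s c : ℝ, |c| ≤ 1 → |cl s - c| ≤ |s - c| := fun s c hc => by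
    have h2 := abs_le.1 hc
    have hcc : cl c = c := by
      simp only [cl]; rw [min_eq_right h2.2, max_eq_right h2.1]
    calc |cl s - c| = |cl s - cl c| := by rw [hcc]
      _ ≤ |min 1 s - min 1 c| := by
        simpa using abs_max_sub_max_le_max (-1) (min 1 s) (-1) (min 1 c)
      _ ≤ |s - c| := by
        simpa using abs_min_sub_min_le_max 1 s 1 c
  refine ⟨fun i => ⟨fun t => cl (γ.extend t i), ?_, ?_, ?_, fun t => hcl1 _⟩, ?_, ?_⟩
  · have := γ.continuous_extend
    exact hcl.comp ((continuous_apply i).comp this)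
  · intro t ht
    change cl (γ.extend t i) = 0
    rw [γ.extend_of_le_zero ht, hq0]; exact hcl0
  · intro t ht
    change cl (γ.extend t i) = 0
    rw [γ.extend_of_one_le ht, hql]; exact hcl0
  · intro t
    have : γ.extend t ∈ Metric.thickening ε C := by
      apply hγ1
      rw [← γ.extend_range]; exact mem_range_self t
    rw [Metric.mem_thickening_iff] at this
    obtain ⟨_, ⟨k, rfl⟩, hk⟩ := this
    refine ⟨k, fun i => (hcld _ _ (hb i k)).trans_lt ?_⟩
    exact (dist_le_pi_dist (γ.extend t) (G k) i).trans_lt hk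
  · intro k
    have h1 := hS (mem_range_self k : G k ∈ C)
    simp only [mem_iUnion] at h1
    obtain ⟨s, hs, hks⟩ := h1
    rw [← he.2] at hs
    obtain ⟨m, rfl⟩ := hs
    have h2 := hγ2 (Fin.castSucc (Fin.succ m))
    have h3 : q (Fin.castSucc (Fin.succ m)) = e m := by
      simp only [q, Fin.snoc_castSucc, Fin.cons_succ]
    rw [h3, ← γ.extend_range] at h2
    obtain ⟨t, ht⟩ := h2
    refine ⟨t, fun i => (hcld _ _ (hb i k)).trans_lt ?_⟩
    change |γ.extend t i - g i k| < ε
    rw [ht, abs_sub_comm]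
    exact (dist_le_pi_dist (G k) (e m) i).trans_lt hks

/-- Gluing a sequence of loops to a function on the half line. -/
def glue (x : ℕ → Lp) (t : HalfLine) : ℝ := (x ⌊(t : ℝ)⌋₊).1 ((t : ℝ) - ⌊(t : ℝ)⌋₊)

theorem continuous_glue (x : ℕ → Lp) : Continuous (glue x) := by
  have key : ∀ N : ℕ, ∀ t : HalfLine, (t : ℝ) < N →
      glue x t = ∑ n ∈ Finset.range N, (x n).1 ((t : ℝ) - n) := by
    intro N t ht
    have h0 : (0 : ℝ) ≤ t := t.2
    have hm : ⌊(t : ℝ)⌋₊ ∈ Finset.range N := by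
      rw [Finset.mem_range]; exact (Nat.floor_lt h0).2 ht
    rw [Finset.sum_eq_single_of_mem _ hm]
    · rfl
    · intro n _ hn
      rcases lt_or_gt_of_ne hn with h | h
      · apply (x n).2.2.2.1
        have : ((n + 1 : ℕ) : ℝ) ≤ t := (Nat.le_floor_iff h0).1 h
        push_cast at this; linarith
      · apply (x n).2.2.1
        have := (Nat.floor_lt h0).1 h
        linarith
  rw [continuous_iff_continuousAt]
  intro t
  obtain ⟨N, hN⟩ := exists_nat_gt (t : ℝ)
  have hc : Continuous fun t : HalfLine => ∑ n ∈ Finset.range N, (x n).1 ((t : ℝ) - n) :=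
    continuous_finsetSum _ fun n _ => (x n).2.1.comp (by fun_prop)
  refine hc.continuousAt.congr ?_
  have : ∀ᶠ s : HalfLine in 𝓝 t, (s : ℝ) < N :=
    (continuous_subtype_val.tendsto t).eventually (eventually_lt_nhds hN)
  filter_upwards [this] with s hs
  exact (key N s hs).symm

theorem exists_wellOrder_countable {ι : Type*} (h : Cardinal.mk ι ≤ Cardinal.aleph 1) :
    ∃ (_ : LinearOrder ι) (_ : WellFoundedLT ι), ∀ α : ι, (Iio α).Countable := by
  obtain ⟨lo, wf, h1⟩ := Cardinal.exists_ord_eq_type_lt ι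
  refine ⟨lo, wf, fun α => ?_⟩
  have h2 := (Cardinal.mk_Iio_lt α h1).trans_le h
  rw [← Cardinal.le_aleph0_iff_set_countable]
  rwa [← Order.lt_succ_iff, Cardinal.succ_aleph0]

theorem exists_functions (K : Type*) [TopologicalSpace K] [CompactSpace K] [T2Space K]
    (B : Set (Set K)) (hB : TopologicalSpace.IsTopologicalBasis B) (p : K) :
    ∃ g : B × B → C(K, ℝ), (∀ i, g i p = 0) ∧ (∀ i x, |g i x| ≤ 1) ∧
      ∀ x y, (∀ i, g i x = g i y) → x = y := by
  classical
  have h : ∀ i : B × B, ∃ g : C(K, ℝ), (∀ x, g x ∈ Icc (0 : ℝ) 1) ∧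
      (closure i.1.1 ⊆ i.2.1 → EqOn g 0 (closure i.1.1) ∧ EqOn g 1 (i.2.1)ᶜ) := by
    intro i
    by_cases hi : closure i.1.1 ⊆ i.2.1
    · obtain ⟨f, h1, h2, h3⟩ := exists_continuous_zero_one_of_isClosed
        (isClosed_closure (s := i.1.1)) (hB.isOpen i.2.2).isClosed_compl
        (disjoint_compl_right_iff_subset.2 hi)
      exact ⟨f, h3, fun _ => ⟨h1, h2⟩⟩
    · exact ⟨0, fun x => by simp, fun h => absurd h hi⟩
  choose g hg1 hg2 using h
  refine ⟨fun i => g i - ContinuousMap.const K (g i p), fun i => by simp, fun i x => ?_, ?_⟩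
  · have h1 := hg1 i x
    have h2 := hg1 i p
    simp only [ContinuousMap.sub_apply, ContinuousMap.const_apply]
    rw [abs_le]; constructor <;> linarith [h1.1, h1.2, h2.1, h2.2]
  · intro x y hxy
    by_contra hne
    have hxy' : ∀ i, g i x = g i y := fun i => by simpa using hxy i
    obtain ⟨V, hV, hxV, hVs⟩ := hB.exists_subset_of_mem_open (show x ∈ ({y}ᶜ : Set K) from hne)
      isOpen_compl_singleton
    obtain ⟨U, hU, hxU, hUV⟩ := hB.exists_closure_subset ((hB.isOpen hV).mem_nhds hxV)
    have h3 := hg2 (⟨U, hU⟩, ⟨V, hV⟩) hUV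
    have h4 := hxy' (⟨U, hU⟩, ⟨V, hV⟩)
    rw [h3.1 (subset_closure hxU), h3.2 (fun hy => hVs hy rfl)] at h4
    simp at h4

theorem exists_b {K : Type*} [TopologicalSpace K] [CompactSpace K] [ConnectedSpace K] {ι : Type*}
    (g : ι → C(K, ℝ)) (p : K) (hp : ∀ i, g i p = 0) (hb : ∀ i x, |g i x| ≤ 1) :
    ∃ b : ι → Finset ι × ℕ → Lp, ∀ (F : Finset ι) (ε : ℝ), 0 < ε →
      ∀ᶠ j in atTop, (∀ t, ∃ k, ∀ i ∈ F, |(b i j).1 t - g i k| < ε) ∧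
        (∀ k, ∃ t, ∀ i ∈ F, |(b i j).1 t - g i k| < ε) := by
  classical
  have h := fun j : Finset ι × ℕ => approx (F := j.1) (fun i => g i) p (fun i => hp i)
    (fun i => hb i) (1 / ((j.2 : ℝ) + 1)) (by positivity)
  choose f hf1 hf2 using h
  refine ⟨fun i j => if h : i ∈ j.1 then f j ⟨i, h⟩ else default, fun F ε hε => ?_⟩
  obtain ⟨N, hN⟩ := exists_nat_one_div_lt hε
  filter_upwards [eventually_ge_atTop (F, N)] with j hj
  have hj1 : F ⊆ j.1 := hj.1
  have hj2 : 1 / ((j.2 : ℝ) + 1) ≤ 1 / ((N : ℝ) + 1) := by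
    have : (N : ℝ) ≤ j.2 := by exact_mod_cast hj.2
    gcongr
  refine ⟨fun t => ?_, fun k => ?_⟩
  · obtain ⟨k, hk⟩ := hf1 j t
    refine ⟨k, fun i hi => ?_⟩
    rw [dif_pos (hj1 hi)]
    exact (hk ⟨i, hj1 hi⟩).trans_le (hj2.trans hN.le)
  · obtain ⟨t, ht⟩ := hf2 j k
    refine ⟨t, fun i hi => ?_⟩
    rw [dif_pos (hj1 hi)]
    exact (ht ⟨i, hj1 hi⟩).trans_le (hj2.trans hN.le)

theorem exists_x {K : Type*} [TopologicalSpace K] [CompactSpace K] [ConnectedSpace K] {ι : Type*}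
    (hι : Cardinal.mk ι ≤ Cardinal.aleph 1)
    (g : ι → C(K, ℝ)) (p : K) (hp : ∀ i, g i p = 0) (hb : ∀ i x, |g i x| ≤ 1) :
    ∃ x : ι → ℕ → Lp, ∀ (F : Finset ι) (a : F → ℚ × ℚ),
      ((∃ k, ∀ i : F, ((a i).1 : ℝ) < g i k ∧ g i k < (a i).2) →
        ∀ᶠ n in atTop, ∃ t, ∀ i : F, ((a i).1 : ℝ) < (x i n).1 t ∧ (x i n).1 t < (a i).2) ∧
      ((∀ k, ∃ i : F, g i k ∉ Icc ((a i).1 : ℝ) (a i).2) →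
        ∀ᶠ n in atTop, ¬ ∃ t, ∀ i : F, ((a i).1 : ℝ) < (x i n).1 t ∧ (x i n).1 t < (a i).2) := by
  classical
  obtain ⟨lo, wf, hc⟩ := exists_wellOrder_countable hι
  obtain ⟨b, hb'⟩ := exists_b g p hp hb
  obtain ⟨x, hx⟩ := sat (L := LB) hc (atTop : Filter (Finset ι × ℕ)) b
  refine ⟨x, fun F a => ?_⟩
  obtain ⟨φ, hφ⟩ := exists_box_formula a
  let G : K → (F → ℝ) := fun k i => g i k
  have hG : Continuous G := by fun_prop
  refine ⟨?_, fun h => ?_⟩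
  · rintro ⟨k, hk⟩
    have h1 := hx F φ Subtype.val
    have hop : IsOpen (univ.pi fun i : F => Ioo ((a i).1 : ℝ) (a i).2) :=
      isOpen_set_pi finite_univ fun i _ => isOpen_Ioo
    obtain ⟨ε, hε, hball⟩ := Metric.isOpen_iff.1 hop (G k) (fun i _ => hk i)
    have h2 := h1 (by
      filter_upwards [hb' F ε hε] with j hj
      rw [hφ]
      obtain ⟨t, ht⟩ := hj.2 k
      refine ⟨t, fun i => ?_⟩
      have : (fun i : F => (b i j).1 t) ∈ Metric.ball (G k) ε := by
        rw [Metric.mem_ball, dist_pi_lt_iff hε]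
        exact fun i => ht i i.2
      exact hball this i (mem_univ i))
    filter_upwards [h2] with n hn
    exact (hφ _).1 hn
  · have h1 := hx F φ.not Subtype.val
    have hcl : IsClosed (univ.pi fun i : F => Icc ((a i).1 : ℝ) (a i).2) :=
      isClosed_set_pi fun i _ => isClosed_Icc
    have hdis : Disjoint (range G) (univ.pi fun i : F => Icc ((a i).1 : ℝ) (a i).2) := by
      rw [Set.disjoint_left]
      rintro _ ⟨k, rfl⟩ hk
      obtain ⟨i, hi⟩ := h k
      exact hi (hk i (mem_univ i))
    obtain ⟨ε, hε, hd⟩ := hdis.exists_thickenings (isCompact_range hG) hcl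
    have h2 := h1 (by
      filter_upwards [hb' F ε hε] with j hj
      rw [FirstOrder.Language.Formula.realize_not, hφ]
      rintro ⟨t, ht⟩
      obtain ⟨k, hk⟩ := hj.1 t
      refine (Set.disjoint_left.1 hd : ∀ ⦃a⦄, _ → _) (a := fun i : F => (b i j).1 t) ?_ ?_
      · rw [Metric.mem_thickening_iff]
        refine ⟨G k, mem_range_self k, ?_⟩
        rw [dist_pi_lt_iff hε]
        exact fun i => hk i i.2
      · apply Metric.self_subset_thickening hε
        exact fun i _ => ⟨(ht i).1.le, (ht i).2.le⟩)
    filter_upwards [h2] with n hn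
    rw [FirstOrder.Language.Formula.realize_not, hφ] at hn
    exact hn

theorem box_of_open {ι : Type*} (z : ι → ℝ) (s : Set (ι → ℝ)) (hs : s ∈ 𝓝 z) :
    ∃ (F : Finset ι) (a : F → ℚ × ℚ), (∀ i : F, ((a i).1 : ℝ) < z i ∧ z i < (a i).2) ∧
      ∀ y : ι → ℝ, (∀ i : F, y i ∈ Icc ((a i).1 : ℝ) (a i).2) → y ∈ s := by
  obtain ⟨s1, hs', hso, hzs⟩ := mem_nhds_iff.1 hs
  obtain ⟨F, u, hu, hus⟩ := isOpen_pi_iff.1 hso z hzs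
  have h : ∀ i : F, ∃ a : ℚ × ℚ, ((a.1 : ℝ) < z i ∧ z i < a.2) ∧ Icc (a.1 : ℝ) a.2 ⊆ u i := by
    intro i
    obtain ⟨l, r, hlr, hsub⟩ := mem_nhds_iff_exists_Ioo_subset.1 ((hu i i.2).1.mem_nhds (hu i i.2).2)
    obtain ⟨a, ha1, ha2⟩ := exists_rat_btwn hlr.1
    obtain ⟨c, hc1, hc2⟩ := exists_rat_btwn hlr.2
    exact ⟨(a, c), ⟨ha2, hc1⟩, fun w hw => hsub ⟨ha1.trans_le hw.1, hw.2.trans_lt hc2⟩⟩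
  choose a ha1 ha2 using h
  refine ⟨F, a, ha1, fun y hy => hs' (hus fun i hi => ?_)⟩
  exact ha2 ⟨i, hi⟩ (hy ⟨i, hi⟩)

theorem tendsto_coe_cocompact : Tendsto (fun t : HalfLine => (t : ℝ)) (cocompact HalfLine) atTop := by
  have h1 : IsClosedEmbedding (Subtype.val : HalfLine → ℝ) := isClosed_Ici.isClosedEmbedding_subtypeVal
  have h2 := tendsto_norm_cocompact_atTop.comp h1.tendsto_cocompact
  refine h2.congr fun t => ?_
  exact Real.norm_of_nonneg t.2

theorem frequently_cocompact (P : HalfLine → Prop)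
    (h : ∀ N : ℕ, ∃ t : HalfLine, (N : ℝ) ≤ t ∧ P t) : ∃ᶠ t in cocompact HalfLine, P t := by
  intro hev
  obtain ⟨S, hS, hSs⟩ := mem_cocompact.1 hev
  obtain ⟨M, hM⟩ := (hS.image continuous_subtype_val).bddAbove
  obtain ⟨N, hN⟩ := exists_nat_gt M
  obtain ⟨t, ht, hPt⟩ := h N
  have : t ∉ S := fun hts => by
    have := hM (mem_image_of_mem _ hts)
    linarith
  exact hSs this hPt

/-- Every continuum of weight at most ℵ₁ is a continuous image of `H*`. -/
theorem halfLineStar_maps_onto_continua_of_weight_le_aleph_one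
    (K : Type*) [TopologicalSpace K] [CompactSpace K] [T2Space K]
    [ConnectedSpace K] [Nonempty K]
    (hw : ∃ B : Set (Set K), TopologicalSpace.IsTopologicalBasis B ∧
      Cardinal.mk B ≤ Cardinal.aleph 1) :
    ∃ f : HalfLineStar → K, Continuous f ∧ Surjective f := by
  obtain ⟨B, hB, hBc⟩ := hw
  obtain ⟨p⟩ := ‹Nonempty K›
  obtain ⟨g, hg0, hg1, hgs⟩ := exists_functions K B hB p
  have hι : Cardinal.mk (B × B) ≤ Cardinal.aleph 1 := by
    rw [Cardinal.mk_prod, Cardinal.lift_id]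
    exact (mul_le_mul' hBc hBc).trans (Cardinal.mul_eq_self (Cardinal.aleph0_le_aleph 1)).le
  obtain ⟨x, hx⟩ := exists_x hι g p hg0 hg1
  let G : K → (B × B → ℝ) := fun k i => g i k
  have hG : Continuous G := by fun_prop
  have hGi : Injective G := fun a b hab => hgs a b fun i => congrFun hab i
  have hGe : IsClosedEmbedding G := hG.isClosedEmbedding hGi
  let Φ : HalfLine → (B × B → Icc (-1 : ℝ) 1) := fun t i =>
    ⟨glue (x i) t, abs_le.1 ((x i _).2.2.2.2 _)⟩
  have hΦ : Continuous Φ := continuous_pi fun i => (continuous_glue (x i)).subtype_mk _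
  let v : (B × B → Icc (-1 : ℝ) 1) → (B × B → ℝ) := fun y i => y i
  have hv : Continuous v := by fun_prop
  let E : StoneCech HalfLine → (B × B → ℝ) := fun y => v (stoneCechExtend hΦ y)
  have hE : Continuous E := hv.comp (continuous_stoneCechExtend hΦ)
  have hEu : ∀ t, E (stoneCechUnit t) = fun i => glue (x i) t := fun t => by
    simp only [E, stoneCechExtend_stoneCechUnit]; rfl
  have claimA : ∀ z, z ∉ range G → ∃ W ∈ 𝓝 z, ∀ᶠ t in cocompact HalfLine,
      E (stoneCechUnit t) ∉ W := by
    intro z hz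
    obtain ⟨F, a, ha, hs⟩ := box_of_open z _ (hGe.isClosed_range.isOpen_compl.mem_nhds hz)
    refine ⟨(F : Set (B × B)).pi fun i => {r | ∀ h : i ∈ F, r ∈ Ioo ((a ⟨i, h⟩).1 : ℝ) (a ⟨i, h⟩).2},
      set_pi_mem_nhds F.finite_toSet fun i hi => ?_, ?_⟩
    · filter_upwards [Ioo_mem_nhds (ha ⟨i, hi⟩).1 (ha ⟨i, hi⟩).2] with r hr h using hr
    · have h1 := (hx F a).2 (by
        intro k
        by_contra hcon
        push Not at hcon
        exact hs (G k) hcon (mem_range_self k))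
      have h2 := (tendsto_nat_floor_atTop.comp tendsto_coe_cocompact).eventually h1
      filter_upwards [h2] with t ht hW
      apply ht
      refine ⟨(t : ℝ) - ⌊(t : ℝ)⌋₊, fun i => ?_⟩
      rw [hEu] at hW
      exact hW i i.2 i.2
  have claimB : ∀ k, ∀ W ∈ 𝓝 (G k), ∃ᶠ t in cocompact HalfLine, E (stoneCechUnit t) ∈ W := by
    intro k W hW
    obtain ⟨F, a, ha, hs⟩ := box_of_open (G k) W hW
    have h1 := (hx F a).1 ⟨k, ha⟩
    apply frequently_cocompact
    intro N
    obtain ⟨n, ⟨s, hs'⟩, hnN⟩ := (h1.and (eventually_ge_atTop N)).exists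
    have hnN' : (N : ℝ) ≤ n := by exact_mod_cast hnN
    obtain ⟨r, hr0, hr1, hr⟩ : ∃ r : ℝ, 0 ≤ r ∧ r < 1 ∧ ∀ i, (x i n).1 r = (x i n).1 s := by
      by_cases h : 0 ≤ s ∧ s < 1
      · exact ⟨s, h.1, h.2, fun _ => rfl⟩
      · refine ⟨0, le_rfl, one_pos, fun i => ?_⟩
        rw [(x i n).2.2.1 0 le_rfl]
        by_cases h0 : 0 ≤ s
        · exact ((x i n).2.2.2.1 s (not_lt.1 fun h1 => h ⟨h0, h1⟩)).symm
        · exact ((x i n).2.2.1 s (not_le.1 h0).le).symm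
    have hfl : ⌊(n : ℝ) + r⌋₊ = n := by
      rw [Nat.floor_eq_iff (by positivity)]
      constructor <;> linarith
    refine ⟨⟨n + r, by simp only [mem_Ici]; positivity⟩, by simp only; linarith, ?_⟩
    apply hs
    intro i
    rw [hEu]
    have : glue (x i) ⟨n + r, by simp only [mem_Ici]; positivity⟩ = (x i n).1 s := by
      simp only [glue, hfl]
      rw [← hr, add_sub_cancel_left]
    simp only [this]
    exact ⟨(hs' i).1.le, (hs' i).2.le⟩
  have hmem : ∀ y : HalfLineStar, E y ∈ range G := by
    intro y
    by_contra hz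
    obtain ⟨W, hW, hev⟩ := claimA _ hz
    have hne : (comap (stoneCechUnit : HalfLine → StoneCech HalfLine) (𝓝 y.1)).NeBot :=
      isDenseInducing_stoneCechUnit.comap_nhds_neBot y.1
    have hle : comap (stoneCechUnit : HalfLine → StoneCech HalfLine) (𝓝 y.1) ≤
        cocompact HalfLine := by
      intro U hU
      obtain ⟨S, hS, hSU⟩ := mem_cocompact.1 hU
      have h1 : IsClosed ((stoneCechUnit : HalfLine → StoneCech HalfLine) '' S) :=
        (hS.image continuous_stoneCechUnit).isClosed
      refine mem_of_superset (preimage_mem_comap (h1.isOpen_compl.mem_nhds ?_)) ?_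
      · rintro ⟨t, _, ht⟩
        exact y.2 ⟨t, ht⟩
      · intro t ht
        exact hSU fun hts => ht (mem_image_of_mem _ hts)
    have h2 : ∀ᶠ t in comap (stoneCechUnit : HalfLine → StoneCech HalfLine) (𝓝 y.1),
        E (stoneCechUnit t) ∈ W :=
      (hE.continuousAt.tendsto.comp tendsto_comap).eventually hW
    obtain ⟨t, h3, h4⟩ := (h2.and (hle hev)).exists
    exact h4 h3
  have hsurj : ∀ k, ∃ y : HalfLineStar, E y = G k := by
    intro k
    have hcl : MapClusterPt (G k) (cocompact HalfLine) (fun t => E (stoneCechUnit t)) := by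
      rw [mapClusterPt_iff_frequently]
      exact claimB k
    obtain ⟨U, hU, hUt⟩ := mapClusterPt_iff_ultrafilter.1 hcl
    obtain ⟨y, -, hy⟩ := isCompact_univ.ultrafilter_le_nhds (U.map stoneCechUnit) (by simp)
    have hy' : Tendsto (stoneCechUnit : HalfLine → StoneCech HalfLine) U (𝓝 y) := hy
    refine ⟨⟨y, ?_⟩, ?_⟩
    · rintro ⟨t, rfl⟩
      have h1 : Tendsto (id : HalfLine → HalfLine) U (𝓝 t) :=
        isInducing_stoneCechUnit.tendsto_nhds_iff.2 hy'
      have h2 : (U : Filter HalfLine) ≤ 𝓝 t := h1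
      have : LocallyCompactSpace HalfLine := isClosed_Ici.locallyCompactSpace
      have : (U : Filter HalfLine) ≤ ⊥ := (disjoint_nhds_cocompact t) h2 hU
      exact U.neBot.ne (le_bot_iff.1 this)
    · exact tendsto_nhds_unique ((hE.tendsto y).comp hy') hUt
  let e : K ≃ₜ range G := hGe.isEmbedding.toHomeomorph
  refine ⟨fun y => e.symm ⟨E y, hmem y⟩, ?_, ?_⟩
  · exact e.symm.continuous.comp ((hE.comp continuous_subtype_val).subtype_mk _)
  · intro k
    obtain ⟨y, hy⟩ := hsurj k
    refine ⟨y, ?_⟩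
    rw [Homeomorph.symm_apply_eq]
    exact Subtype.ext hy
end
end

section
/- (Aarts–van Emde Boas) The Čech–Stone remainder H* of the half line H = [0,∞) maps onto every metric continuum: for every nonempty compact connected metric space K there exists a continuous surjection from H* onto K. -/
open Set Topology Function

noncomputable section

open Filter in
/-- Concatenation of countably many paths to a map on the half line. -/
theorem glue_paths {E : Type*} [TopologicalSpace E] (a : ℕ → E)
    (p : ∀ n : ℕ, Path (a n) (a (n + 1))) :
    ∃ g : HalfLine → E, Continuous g ∧ (∀ n : ℕ, g ⟨n, Set.mem_Ici.2 (Nat.cast_nonneg n)⟩ = a n) ∧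
      ∀ (n : ℕ) (t : HalfLine), (n : ℝ) ≤ t → ∃ m, n ≤ m ∧ g t ∈ range (p m) := by
  refine ⟨fun t => (p ⌊(t : ℝ)⌋₊).extend ((t : ℝ) - ⌊(t : ℝ)⌋₊), ?_, ?_, ?_⟩
  · have key : ∀ (n : ℕ) (t : ℝ), (n : ℝ) ≤ t → t ≤ n + 1 →
        (p ⌊t⌋₊).extend (t - ⌊t⌋₊) = (p n).extend (t - n) := by
      intro n t h1 h2
      rcases h2.lt_or_eq with h | h
      · have : ⌊t⌋₊ = n := (Nat.floor_eq_iff ((Nat.cast_nonneg n).trans h1)).2 ⟨h1, h⟩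
        rw [this]
      · have h3 : t = ((n + 1 : ℕ) : ℝ) := by push_cast; exact h
        have : ⌊t⌋₊ = n + 1 := by rw [h3, Nat.floor_natCast]
        rw [this, h3]
        simp
    have hlf : LocallyFinite fun n : ℕ => {t : HalfLine | (n : ℝ) ≤ t ∧ (t : ℝ) ≤ n + 1} := by
      intro x
      refine ⟨{t : HalfLine | (t : ℝ) < x + 1}, ?_, ?_⟩
      · exact (isOpen_lt continuous_subtype_val continuous_const).mem_nhds (by simp)
      · refine (Set.finite_Iic ⌈(x : ℝ) + 1⌉₊).subset ?_
        rintro n ⟨t, ⟨h1, -⟩, h2⟩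
        have h2' : (t : ℝ) < x + 1 := h2
        have := Nat.le_ceil ((x : ℝ) + 1)
        have h3 : (n : ℝ) ≤ (⌈(x : ℝ) + 1⌉₊ : ℝ) := by linarith
        exact_mod_cast h3
    refine hlf.continuous ?_ ?_ ?_
    · refine eq_univ_of_forall fun t => mem_iUnion.2 ⟨⌊(t : ℝ)⌋₊, ?_, ?_⟩
      · exact Nat.floor_le t.2
      · exact (Nat.lt_floor_add_one _).le
    · intro n
      exact (isClosed_le continuous_const continuous_subtype_val).inter
        (isClosed_le continuous_subtype_val continuous_const)
    · intro n
      refine ContinuousOn.congr (f := fun t : HalfLine => (p n).extend ((t : ℝ) - n)) ?_ ?_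
      · have : Continuous fun t : HalfLine => (p n).extend ((t : ℝ) - n) :=
          (p n).continuous_extend.comp (continuous_subtype_val.sub continuous_const)
        exact this.continuousOn
      · rintro t ⟨h1, h2⟩
        exact key n t h1 h2
  · intro n
    simp
  · intro n t ht
    refine ⟨⌊(t : ℝ)⌋₊, Nat.le_floor ht, ?_⟩
    rw [← Path.extend_range]
    exact mem_range_self _

open Filter in
/-- A sequence having every point as a cluster point. -/
theorem exists_cluster_seq (K : Type*) [TopologicalSpace K] [TopologicalSpace.SeparableSpace K] [Nonempty K] :
    ∃ d : ℕ → K, ∀ k, MapClusterPt k atTop d := by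
  refine ⟨fun n => TopologicalSpace.denseSeq K n.unpair.1, fun k => ?_⟩
  rw [mapClusterPt_iff_frequently]
  intro s hs
  obtain ⟨i, hi⟩ := (TopologicalSpace.denseRange_denseSeq K).exists_mem_open isOpen_interior
    ⟨k, mem_interior_iff_mem_nhds.2 hs⟩
  rw [frequently_atTop]
  intro n
  refine ⟨Nat.pair i n, Nat.right_le_pair i n, ?_⟩
  simpa using interior_subset hi

open Filter in
/-- Points of a connected metric space embedded isometrically in a normed space are joined near
the image of the space. -/
theorem joined_near {K E : Type*} [MetricSpace K] [ConnectedSpace K]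
    [NormedAddCommGroup E] [NormedSpace ℝ E] (e : K → E) (he : Isometry e) (ε : ℝ) (hε : 0 < ε)
    (x y : K) :
    JoinedIn (Metric.thickening ε (range e) ∩ convexHull ℝ (range e)) (e x) (e y) := by
  have : Std.Symm (fun x y : K =>
    JoinedIn (Metric.thickening ε (range e) ∩ convexHull ℝ (range e)) (e x) (e y)) :=
    ⟨fun x y h => h.symm⟩
  refine PreconnectedSpace.induction₂ (fun x y : K =>
    JoinedIn (Metric.thickening ε (range e) ∩ convexHull ℝ (range e)) (e x) (e y))
    ?_ ?_ x y
  · intro x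
    filter_upwards [Metric.ball_mem_nhds x hε] with y hy
    refine JoinedIn.of_segment_subset (subset_inter ?_ ?_)
    · have h1 : segment ℝ (e x) (e y) ⊆ Metric.ball (e x) ε :=
        (convex_ball _ _).segment_subset (Metric.mem_ball_self hε)
          (by rw [Metric.mem_ball, he.dist_eq]; exact hy)
      exact h1.trans (Metric.ball_subset_thickening (mem_range_self x) ε)
    · exact (convex_convexHull ℝ _).segment_subset
        (subset_convexHull ℝ _ (mem_range_self x)) (subset_convexHull ℝ _ (mem_range_self y))
  · exact ⟨fun x y z h1 h2 => h1.trans h2⟩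

open Filter in
/-- (Aarts–van Emde Boas) `H*` maps onto every metric continuum. -/
theorem halfLineStar_maps_onto_metric_continua
    (K : Type*) [MetricSpace K] [CompactSpace K] [ConnectedSpace K] [Nonempty K] :
    ∃ f : HalfLineStar → K, Continuous f ∧ Surjective f := by
  obtain ⟨e, he⟩ := KuratowskiEmbedding.exists_isometric_embedding K
  obtain ⟨d, hd⟩ := exists_cluster_seq K
  have hJ := fun n : ℕ => joined_near e he (1 / ((n : ℝ) + 1)) (by positivity) (d n) (d (n + 1))
  obtain ⟨g, hgc, hgn, hgr⟩ := glue_paths (fun n => e (d n)) (fun n => (hJ n).somePath)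
  have hKc : IsCompact (range e) := isCompact_range he.continuous
  have hC : IsCompact (closure (convexHull ℝ (range e))) :=
    hKc.totallyBounded.convexHull.closure.isCompact_of_isClosed isClosed_closure
  have hgC : ∀ t, g t ∈ closure (convexHull ℝ (range e)) := by
    intro t
    obtain ⟨m, -, s, hs⟩ := hgr 0 t (by simpa only [Nat.cast_zero] using Set.mem_Ici.1 t.2)
    rw [← hs]
    exact subset_closure ((hJ m).somePath_mem s).2
  have hgT : ∀ (n : ℕ) (t : HalfLine), (n : ℝ) ≤ t →
      Metric.infDist (g t) (range e) ≤ 1 / ((n : ℝ) + 1) := by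
    intro n t ht
    obtain ⟨m, hm, s, hs⟩ := hgr n t ht
    rw [← hs]
    have h1 := ((hJ m).somePath_mem s).1
    rw [Metric.mem_thickening_iff_infDist_lt (range_nonempty e)] at h1
    exact h1.le.trans (Nat.one_div_le_one_div hm)
  have : CompactSpace (closure (convexHull ℝ (range e))) := isCompact_iff_compactSpace.1 hC
  let G : HalfLine → closure (convexHull ℝ (range e)) := fun t => ⟨g t, hgC t⟩
  have hG : Continuous G := hgc.subtype_mk _
  let F : StoneCech HalfLine → lp (fun _ : ℕ => ℝ) ⊤ := fun p => (stoneCechExtend hG p : _)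
  have hF : Continuous F := continuous_subtype_val.comp (continuous_stoneCechExtend hG)
  have hFu : ∀ t, F (stoneCechUnit t) = g t := fun t => by
    simp only [F, stoneCechExtend_stoneCechUnit, G]
  have hmem : ∀ p ∈ HalfLineStar, F p ∈ range e := by
    intro p hp
    have hne : (comap (stoneCechUnit : HalfLine → StoneCech HalfLine) (𝓝 p)).NeBot :=
      isDenseInducing_stoneCechUnit.comap_nhds_neBot p
    obtain ⟨U, hU⟩ := exists_ultrafilter_le (comap (stoneCechUnit : HalfLine → StoneCech HalfLine) (𝓝 p))
    have hUp : Tendsto stoneCechUnit (U : Filter HalfLine) (𝓝 p) := tendsto_iff_comap.2 hU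
    have hUg : Tendsto g (U : Filter HalfLine) (𝓝 (F p)) := by
      have := (hF.tendsto p).comp hUp
      refine this.congr fun t => hFu t
    have hlarge : ∀ n : ℕ, ∀ᶠ t : HalfLine in U, (n : ℝ) ≤ t := by
      intro n
      by_contra hcon
      have h1 : {t : HalfLine | (n : ℝ) ≤ t}ᶜ ∈ U := Ultrafilter.compl_mem_iff_notMem.2 hcon
      have hc : IsCompact ((Subtype.val : HalfLine → ℝ) ⁻¹' Icc 0 (n : ℝ)) :=
        isClosed_Ici.isClosedEmbedding_subtypeVal.isCompact_preimage isCompact_Icc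
      have h2 : (Subtype.val : HalfLine → ℝ) ⁻¹' Icc 0 (n : ℝ) ∈ U := by
        refine mem_of_superset h1 ?_
        intro t ht
        have ht' : ¬ (n : ℝ) ≤ t := ht
        exact ⟨t.2, (not_le.1 ht').le⟩
      obtain ⟨h, -, hh⟩ := hc.ultrafilter_le_nhds U (le_principal_iff.2 h2)
      have h3 : Tendsto stoneCechUnit (U : Filter HalfLine) (𝓝 (stoneCechUnit h)) :=
        (continuous_stoneCechUnit.tendsto h).mono_left hh
      exact hp ⟨h, tendsto_nhds_unique h3 hUp⟩
    have hle : ∀ n : ℕ, Metric.infDist (F p) (range e) ≤ 1 / ((n : ℝ) + 1) := by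
      intro n
      have h1 : Tendsto (fun t => Metric.infDist (g t) (range e)) (U : Filter HalfLine)
          (𝓝 (Metric.infDist (F p) (range e))) :=
        ((Metric.continuous_infDist_pt _).tendsto _).comp hUg
      exact le_of_tendsto h1 ((hlarge n).mono fun t ht => hgT n t ht)
    have h0 : Metric.infDist (F p) (range e) ≤ 0 :=
      ge_of_tendsto' tendsto_one_div_add_atTop_nhds_zero_nat hle
    rw [hKc.isClosed.mem_iff_infDist_zero (range_nonempty e)]
    exact le_antisymm h0 Metric.infDist_nonneg
  choose f hf using fun p : HalfLineStar => hmem p.1 p.2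
  refine ⟨f, ?_, ?_⟩
  · rw [he.isEmbedding.continuous_iff]
    have : e ∘ f = fun p : HalfLineStar => F p := funext hf
    rw [this]
    exact hF.comp continuous_subtype_val
  · intro k
    obtain ⟨U, hU, hUk⟩ := mapClusterPt_iff_ultrafilter.1 (hd k)
    let c : ℕ → HalfLine := fun n => ⟨n, Set.mem_Ici.2 (Nat.cast_nonneg n)⟩
    obtain ⟨p, -, hp⟩ := (isCompact_univ : IsCompact (univ : Set (StoneCech HalfLine))).ultrafilter_le_nhds
      (U.map (stoneCechUnit ∘ c)) (by simp)
    have hp' : Tendsto (stoneCechUnit ∘ c) (U : Filter ℕ) (𝓝 p) := hp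
    have hpm : p ∈ HalfLineStar := by
      rintro ⟨h, rfl⟩
      have h1 : Tendsto c (U : Filter ℕ) (𝓝 h) :=
        isInducing_stoneCechUnit.tendsto_nhds_iff.2 hp'
      have h2 : Tendsto (fun n : ℕ => (n : ℝ)) (U : Filter ℕ) (𝓝 (h : ℝ)) :=
        (continuous_subtype_val.tendsto h).comp h1
      exact not_tendsto_nhds_of_tendsto_atTop (tendsto_natCast_atTop_atTop.mono_left hU) _ h2
    refine ⟨⟨p, hpm⟩, he.injective ?_⟩
    rw [hf]
    have h1 : Tendsto (fun n => e (d n)) (U : Filter ℕ) (𝓝 (F p)) := by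
      refine ((hF.tendsto p).comp hp').congr fun n => ?_
      exact (hFu (c n)).trans (hgn n)
    exact tendsto_nhds_unique h1 ((he.continuous.tendsto k).comp hUk)
end
end

section
/- (Parovičenko) Every nonempty compact Hausdorff space of weight at most ℵ₁ is a continuous image of ℕ*: if X is a nonempty compact Hausdorff space admitting a base for its topology of cardinality at most ℵ₁, then there is a continuous surjection from ℕ* onto X. -/
open Set Topology Function

noncomputable section

/-- The Čech–Stone remainder `ℕ* = βℕ ∖ ℕ` of the discrete space `ℕ`. -/
def NatStar : Set (StoneCech ℕ) :=
  (Set.range (stoneCechUnit : ℕ → StoneCech ℕ))ᶜ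

open Filter in
/-- The functions `G j` (for `j ∈ S`) cluster at infinity exactly at the image of `f`. -/
def ParGood {X I : Type*} (f : I → X → unitInterval) (G : I → ℕ → unitInterval)
    (S : Set I) : Prop :=
  (∀ J : Set I, J.Finite → J ⊆ S → ∀ ε : ℝ, 0 < ε →
    ∀ᶠ n in atTop, ∃ x, ∀ j ∈ J, dist (G j n) (f j x) ≤ ε) ∧
  (∀ x, ∀ J : Set I, J.Finite → J ⊆ S → ∀ ε : ℝ, 0 < ε →
    ∃ᶠ n in atTop, ∀ j ∈ J, dist (G j n) (f j x) ≤ ε)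

theorem ParGood.congr {X I : Type*} {f : I → X → unitInterval} {G G' : I → ℕ → unitInterval}
    {S : Set I} (h : ParGood f G S) (hG : ∀ j ∈ S, G j = G' j) : ParGood f G' S := by
  refine ⟨fun J hJ hJS ε hε => ?_, fun x J hJ hJS ε hε => ?_⟩
  · refine (h.1 J hJ hJS ε hε).mono ?_
    rintro n ⟨x, hx⟩
    exact ⟨x, fun j hj => by rw [← hG j (hJS hj)]; exact hx j hj⟩
  · refine (h.2 x J hJ hJS ε hε).mono ?_
    intro n hx j hj
    rw [← hG j (hJS hj)]; exact hx j hj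

/-- A countable family of functions admits a countable set of points dense for the
induced pseudometric. -/
theorem par_dense {X I : Type*} [Nonempty X] (f : I → X → unitInterval) {S : Set I}
    (hS : S.Countable) :
    ∃ t : ℕ → X, ∀ x, ∀ J : Set I, J.Finite → J ⊆ S → ∀ ε : ℝ, 0 < ε →
      ∃ k, ∀ j ∈ J, dist (f j (t k)) (f j x) ≤ ε := by
  have : Countable S := hS.to_subtype
  let Φ : X → (S → unitInterval) := fun x s => f s x
  obtain ⟨d, hd⟩ := TopologicalSpace.exists_dense_seq (Set.range Φ)
  choose t ht using fun k => (d k).2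
  refine ⟨t, fun x J hJ hJS ε hε => ?_⟩
  let W : Set (Set.range Φ) :=
    {y | ∀ j : S, (j : I) ∈ J → dist (y.1 j) (f j x) < ε}
  have hW : IsOpen W := by
    have : W = ⋂ j ∈ {j : S | (j : I) ∈ J}, {y : Set.range Φ | dist (y.1 j) (f j x) < ε} := by
      ext y; simp [W]
    rw [this]
    refine Set.Finite.isOpen_biInter (hJ.preimage (Subtype.val_injective.injOn)) ?_
    intro j _
    refine isOpen_lt ?_ continuous_const
    exact ((continuous_apply j).comp continuous_subtype_val).dist continuous_const
  obtain ⟨k, hk⟩ := hd.exists_mem_open hW ⟨⟨Φ x, x, rfl⟩, fun j _ => by simpa [Φ] using hε⟩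
  refine ⟨k, fun j hj => ?_⟩
  have := hk ⟨j, hJS hj⟩ hj
  rw [← ht k] at this
  exact this.le

open Filter in
theorem par_step {X I : Type*} [Nonempty X] (f : I → X → unitInterval)
    (G : I → ℕ → unitInterval) {S : Set I} (hS : S.Countable) {i : I} (hi : i ∉ S)
    (h : ParGood f G S) :
    ∃ c : ℕ → unitInterval, ∀ G' : I → ℕ → unitInterval, (∀ j ∈ S, G' j = G j) → G' i = c →
      ParGood f G' (insert i S) := by
  classical
  obtain ⟨t, ht⟩ := par_dense f (hS.insert i)
  obtain ⟨e, he⟩ := Set.countable_iff_exists_injOn.1 hS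
  let D : ℕ → ℕ → X → Prop := fun m n x =>
    ∀ j ∈ S, e j ≤ m → dist (G j n) (f j x) ≤ 1 / ((m : ℝ) + 1)
  have hDmono : ∀ {m m' n x}, m ≤ m' → D m' n x → D m n x := by
    intro m m' n x hm hD j hj hjm
    exact (hD j hj (hjm.trans hm)).trans (Nat.one_div_le_one_div hm)
  have hfin : ∀ m, {j | j ∈ S ∧ e j ≤ m}.Finite := by
    intro m
    refine Set.Finite.of_finite_image ((Set.finite_Iic m).subset ?_)
      (he.mono fun j hj => hj.1)
    rintro _ ⟨j, hj, rfl⟩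
    exact hj.2
  have hpos : ∀ m : ℕ, (0 : ℝ) < 1 / ((m : ℝ) + 1) := fun m => Nat.one_div_pos_of_nat
  have ha : ∀ m, ∀ᶠ n in atTop, ∃ x, D m n x := by
    intro m
    refine (h.1 _ (hfin m) (fun j hj => hj.1) _ (hpos m)).mono ?_
    rintro n ⟨x, hx⟩
    exact ⟨x, fun j hj hjm => hx j ⟨hj, hjm⟩⟩
  have hb : ∀ m x, ∃ᶠ n in atTop, D m n x := by
    intro m x
    refine (h.2 x _ (hfin m) (fun j hj => hj.1) _ (hpos m)).mono ?_
    intro n hx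
    exact fun j hj hjm => hx j ⟨hj, hjm⟩
  let y : ℕ → X := fun k => t (Nat.unpair k).1
  obtain ⟨φ, hφ, hDφ⟩ := extraction_forall_of_frequently (fun k => hb k (y k))
  -- the choice of points
  have hz : ∃ z : ℕ → X, ∀ m, ∀ᶠ n in atTop, D m n (z n) := by
    let M : ℕ → ℕ := fun n => Nat.findGreatest (fun m => ∃ x, D m n x) n
    let z : ℕ → X := fun n => if hx : ∃ x, D (M n) n x then hx.choose else Classical.arbitrary X
    refine ⟨z, fun m => ?_⟩
    filter_upwards [ha m, eventually_ge_atTop m] with n hn hmn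
    have h1 : ∃ x, D (M n) n x := Nat.findGreatest_spec (P := fun m => ∃ x, D m n x) hmn hn
    have h2 : m ≤ M n := Nat.le_findGreatest hmn hn
    have h3 : D (M n) n (z n) := by
      simp only [z, dif_pos h1]; exact h1.choose_spec
    exact hDmono h2 h3
  obtain ⟨z, hz⟩ := hz
  let w : ℕ → X := fun n => if hk : ∃ k, φ k = n then y hk.choose else z n
  have hwφ : ∀ k, w (φ k) = y k := by
    intro k
    have hk : ∃ k', φ k' = φ k := ⟨k, rfl⟩
    have : hk.choose = k := hφ.injective hk.choose_spec
    simp only [w, dif_pos hk, this]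
  have hw : ∀ m, ∀ᶠ n in atTop, D m n (w n) := by
    intro m
    filter_upwards [hz m, eventually_ge_atTop (φ m)] with n hn hmn
    by_cases hk : ∃ k, φ k = n
    · obtain ⟨k, rfl⟩ := hk
      rw [hwφ]
      exact hDmono (hφ.le_iff_le.1 hmn) (hDφ k)
    · simp only [w, dif_neg hk]; exact hn
  refine ⟨fun n => f i (w n), fun G' hG' hGi => ⟨?_, ?_⟩⟩
  · intro J hJ hJS ε hε
    obtain ⟨m₁, hm₁⟩ := (hJ.image e).bddAbove
    obtain ⟨m₂, hm₂⟩ := exists_nat_one_div_lt hε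
    filter_upwards [hw (max m₁ m₂)] with n hn
    refine ⟨w n, fun j hj => ?_⟩
    rcases hJS hj with rfl | hjS
    · rw [hGi]; simpa using hε.le
    · rw [hG' j hjS]
      refine (hn j hjS ((hm₁ ⟨j, hj, rfl⟩).trans (le_max_left _ _))).trans ?_
      exact (Nat.one_div_le_one_div (le_max_right m₁ m₂)).trans hm₂.le
  · intro x J hJ hJS ε hε
    obtain ⟨m₁, hm₁⟩ := (hJ.image e).bddAbove
    obtain ⟨m₂, hm₂⟩ := exists_nat_one_div_lt (half_pos hε)
    obtain ⟨k₀, hk₀⟩ := ht x J hJ hJS (ε / 2) (half_pos hε)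
    rw [frequently_atTop]
    intro N
    let k := Nat.pair k₀ (max N (max m₁ m₂))
    have hk : max N (max m₁ m₂) ≤ k := Nat.right_le_pair _ _
    have hyk : y k = t k₀ := by simp [y, k]
    refine ⟨φ k, ((le_max_left _ _).trans hk).trans (hφ.id_le k), fun j hj => ?_⟩
    have hd := hk₀ j hj
    rcases hJS hj with rfl | hjS
    · rw [hGi]
      simp only [hwφ, hyk]
      linarith
    · rw [hG' j hjS]
      have h1 := hDφ k j hjS ((hm₁ ⟨j, hj, rfl⟩).trans
        ((le_max_left _ _).trans ((le_max_right _ _).trans hk)))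
      have h2 : 1 / ((k : ℝ) + 1) ≤ 1 / ((m₂ : ℝ) + 1) :=
        Nat.one_div_le_one_div ((le_max_right _ _).trans ((le_max_right _ _).trans hk))
      rw [hyk] at h1
      have h3 := dist_triangle (G j (φ k)) (f j (t k₀)) (f j x)
      linarith

open Filter in
/-- The transfinite recursion. -/
theorem par_exists {X I : Type*} [Nonempty X] [LinearOrder I] [WellFoundedLT I]
    (hI : ∀ i : I, (Set.Iio i).Countable) (f : I → X → unitInterval) :
    ∃ G : I → ℕ → unitInterval, ParGood f G Set.univ := by
  classical
  let ext : ∀ i : I, (∀ j, j < i → ℕ → unitInterval) → I → ℕ → unitInterval :=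
    fun i p j => if hj : j < i then p j hj else fun _ => 0
  let P : ∀ i : I, (∀ j, j < i → ℕ → unitInterval) → (ℕ → unitInterval) → Prop :=
    fun i p c => ∀ G' : I → ℕ → unitInterval, (∀ j ∈ Set.Iio i, G' j = ext i p j) → G' i = c →
      ParGood f G' (insert i (Set.Iio i))
  let step : ∀ i : I, (∀ j, j < i → ℕ → unitInterval) → ℕ → unitInterval :=
    fun i p => if hc : ∃ c, P i p c then hc.choose else fun _ => 0
  have wf : WellFounded (fun a b : I => a < b) := wellFounded_lt
  let G : I → ℕ → unitInterval := wf.fix step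
  have hG : ∀ i, G i = step i (fun j _ => G j) := fun i => wf.fix_eq step i
  -- good on all final segments implies good on unions
  have glue : ∀ S : Set I, (∀ j ∈ S, ParGood f G (Set.Iic j)) → ParGood f G S := by
    intro S hS
    refine ⟨fun J hJ hJS ε hε => ?_, fun x J hJ hJS ε hε => ?_⟩
    · rcases J.eq_empty_or_nonempty with rfl | hne
      · simp
      · obtain ⟨m, hm, hmax⟩ := Set.exists_max_image J id hJ hne
        exact (hS m (hJS hm)).1 J hJ hmax ε hε
    · rcases J.eq_empty_or_nonempty with rfl | hne
      · simp [Filter.atTop_neBot]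
      · obtain ⟨m, hm, hmax⟩ := Set.exists_max_image J id hJ hne
        exact (hS m (hJS hm)).2 x J hJ hmax ε hε
  have key : ∀ i, ParGood f G (Set.Iic i) := by
    intro i
    induction i using wf.induction with
    | _ i ih =>
      have h1 : ParGood f G (Set.Iio i) := glue _ fun j hj => ih j hj
      have hext : ∀ j ∈ Set.Iio i, G j = ext i (fun j _ => G j) j := by
        intro j hj
        have hj' : j < i := hj
        simp only [ext, dif_pos hj']
      obtain ⟨c, hc⟩ := par_step f (ext i (fun j _ => G j)) (hI i) (i := i)
        (by simp) (h1.congr hext)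
      have hex : ∃ c, P i (fun j _ => G j) c := ⟨c, hc⟩
      have := hex.choose_spec G hext (by rw [hG i]; simp only [step, dif_pos hex])
      rwa [Set.Iio_insert] at this
  exact ⟨G, glue _ fun j _ => key j⟩

theorem par_exists_card {X I : Type*} [Nonempty X] (hcard : Cardinal.mk I ≤ Cardinal.aleph 1)
    (f : I → X → unitInterval) :
    ∃ G : I → ℕ → unitInterval, ParGood f G Set.univ := by
  obtain ⟨_, _, ho⟩ := Cardinal.exists_ord_eq_type_lt I
  refine par_exists (fun i => ?_) f
  have := (Cardinal.mk_Iio_lt i ho).trans_le hcard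
  rw [← Cardinal.le_aleph0_iff_set_countable]
  rwa [← Order.lt_succ_iff, Cardinal.succ_aleph0]

open Filter in
theorem par_final {X I : Type*} [TopologicalSpace X] [CompactSpace X] [Nonempty X]
    (f : I → X → unitInterval) (hf : ∀ i, Continuous (f i))
    (hsep : ∀ x y, (∀ i, f i x = f i y) → x = y)
    (G : I → ℕ → unitInterval) (hG : ParGood f G Set.univ) :
    ∃ g : NatStar → X, Continuous g ∧ Surjective g := by
  classical
  let Φ : X → (I → unitInterval) := fun x i => f i x
  have hΦc : Continuous Φ := continuous_pi hf
  have hΦi : Function.Injective Φ := fun x y h => hsep x y (congrFun h)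
  have hΦ : IsClosedEmbedding Φ := hΦc.isClosedEmbedding hΦi
  let γ : ℕ → (I → unitInterval) := fun n i => G i n
  have hγ : Continuous γ := continuous_of_discreteTopology
  let E : StoneCech ℕ → (I → unitInterval) := stoneCechExtend hγ
  have hE : Continuous E := continuous_stoneCechExtend hγ
  have hEu : ∀ n, E (stoneCechUnit n) = γ n := stoneCechExtend_stoneCechUnit hγ
  -- neighbourhoods in the product
  have hnhds : ∀ (v : I → unitInterval) (s : Set (I → unitInterval)), s ∈ 𝓝 v →
      ∃ J : Set I, J.Finite ∧ ∃ ε > 0, ∀ u, (∀ j ∈ J, dist (u j) (v j) ≤ ε) → u ∈ s := by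
    intro v s hs
    rw [nhds_pi, Filter.mem_pi] at hs
    obtain ⟨J, hJ, T, hT, hsub⟩ := hs
    choose δ hδ hδT using fun j => Metric.nhds_basis_closedBall.mem_iff.1 (hT j)
    rcases J.eq_empty_or_nonempty with rfl | hne
    · exact ⟨∅, Set.finite_empty, 1, one_pos, fun u _ => hsub (by simp)⟩
    · obtain ⟨m, hm, hmin⟩ := Set.exists_min_image J δ hJ hne
      refine ⟨J, hJ, δ m, hδ m, fun u hu => hsub fun j hj => hδT j ?_⟩
      exact (hu j hj).trans (hmin j hj)
  -- image of the remainder is inside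
  have hin : ∀ p : NatStar, E p ∈ Set.range Φ := by
    intro p
    have hne : (comap stoneCechUnit (𝓝 (p : StoneCech ℕ))).NeBot :=
      Filter.comap_neBot fun t ht => by
        obtain ⟨y, hy, n, rfl⟩ := mem_closure_iff_nhds.1 (denseRange_stoneCechUnit (p : StoneCech ℕ)) t ht
        exact ⟨n, hy⟩
    set F := comap stoneCechUnit (𝓝 (p : StoneCech ℕ)) with hF
    have hFc : F ≤ atTop := by
      rw [← Nat.cofinite_eq_atTop, le_cofinite_iff_compl_singleton_mem]
      intro n
      refine ⟨{stoneCechUnit n}ᶜ, ?_, ?_⟩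
      · refine isOpen_compl_singleton.mem_nhds ?_
        intro h
        exact p.2 ⟨n, (Set.mem_singleton_iff.1 h).symm⟩
      · intro k hk hkn
        exact hk (by rw [Set.mem_singleton_iff.1 hkn]; rfl)
    have hlim : Tendsto γ F (𝓝 (E p)) := by
      have : γ = E ∘ stoneCechUnit := funext fun n => (hEu n).symm
      rw [this]
      exact (hE.tendsto _).comp tendsto_comap
    rw [← hΦ.isClosed_range.closure_eq, mem_closure_iff_nhds]
    intro s hs
    obtain ⟨J, hJ, ε, hε, hs⟩ := hnhds _ s hs
    have h1 := hFc (hG.1 J hJ (Set.subset_univ _) (ε / 2) (half_pos hε))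
    have h2 : ∀ᶠ n in F, ∀ j ∈ J, dist (γ n j) (E p j) < ε / 2 := by
      rw [eventually_all_finite hJ]
      intro j _
      exact (tendsto_pi_nhds.1 hlim j).eventually (Metric.ball_mem_nhds _ (half_pos hε))
    obtain ⟨n, ⟨x, hx⟩, hn⟩ := (Filter.Eventually.and h1 h2).exists
    refine ⟨Φ x, hs _ fun j hj => ?_, x, rfl⟩
    have h3 := hx j hj
    have h4 := hn j hj
    have h5 := dist_triangle_left (f j x) (E p j) (G j n)
    change dist (f j x) (E p j) ≤ ε
    change dist (G j n) (E p j) < ε / 2 at h4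
    linarith
  -- everything is hit
  have hon : ∀ x, ∃ p : NatStar, E p = Φ x := by
    intro x
    have hcl : MapClusterPt (Φ x) atTop γ := by
      rw [mapClusterPt_iff_frequently]
      intro s hs
      obtain ⟨J, hJ, ε, hε, hs⟩ := hnhds _ s hs
      exact (hG.2 x J hJ (Set.subset_univ _) ε hε).mono fun n hn => hs _ hn
    obtain ⟨U, hU, hUx⟩ := mapClusterPt_iff_ultrafilter.1 hcl
    have hp := (U.map (stoneCechUnit : ℕ → StoneCech ℕ)).le_nhds_lim
    set p := (U.map (stoneCechUnit : ℕ → StoneCech ℕ)).lim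
    have htp : Tendsto (stoneCechUnit : ℕ → StoneCech ℕ) U (𝓝 p) := hp
    have hpN : p ∈ NatStar := by
      rintro ⟨n, hn⟩
      let χ : ℕ → Bool := fun k => decide (k = n)
      have hχ : Continuous χ := continuous_of_discreteTopology
      have h1 : Tendsto (stoneCechExtend hχ ∘ stoneCechUnit) U (𝓝 (stoneCechExtend hχ p)) :=
        ((continuous_stoneCechExtend hχ).tendsto p).comp htp
      rw [← hn, stoneCechExtend_stoneCechUnit, stoneCechExtend_extends] at h1
      have h2 : ∀ᶠ k in (U : Filter ℕ), χ k = χ n := by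
        have := h1.eventually (show ∀ᶠ b in 𝓝 (χ n), b = χ n by simp [nhds_discrete])
        exact this
      have h3 : ∀ᶠ k in (U : Filter ℕ), n < k := hU (eventually_gt_atTop n)
      obtain ⟨k, hk, hk'⟩ := (h2.and h3).exists
      have : k = n := by simpa [χ] using hk
      omega
    refine ⟨⟨p, hpN⟩, ?_⟩
    have h1 : Tendsto (E ∘ stoneCechUnit) U (𝓝 (E p)) := (hE.tendsto p).comp htp
    have h2 : E ∘ stoneCechUnit = γ := funext hEu
    rw [h2] at h1
    exact tendsto_nhds_unique h1 hUx
  choose g hg using hin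
  refine ⟨g, ?_, fun x => ?_⟩
  · rw [hΦ.isInducing.continuous_iff]
    have : Φ ∘ g = fun p : NatStar => E p := funext hg
    rw [this]
    exact hE.comp continuous_subtype_val
  · obtain ⟨p, hp⟩ := hon x
    exact ⟨p, hΦi ((hg p).trans hp)⟩

/-- (Parovičenko) Every nonempty compact Hausdorff space of weight at most ℵ₁ is a
continuous image of `ℕ*`. -/
theorem natStar_maps_onto_compacta_of_weight_le_aleph_one
    (X : Type*) [TopologicalSpace X] [CompactSpace X] [T2Space X] [Nonempty X]
    (hw : ∃ B : Set (Set X), TopologicalSpace.IsTopologicalBasis B ∧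
      Cardinal.mk B ≤ Cardinal.aleph 1) :
    ∃ f : NatStar → X, Continuous f ∧ Surjective f := by
  classical
  obtain ⟨B, hB, hcard⟩ := hw
  have hcard2 : Cardinal.mk (B × B) ≤ Cardinal.aleph 1 := by
    simp only [Cardinal.mk_prod, Cardinal.lift_id]
    exact (mul_le_mul' hcard hcard).trans
      (Cardinal.mul_eq_self (Cardinal.aleph0_le_aleph 1)).le
  have hex : ∀ q : B × B, ∃ f : X → unitInterval, Continuous f ∧
      (closure q.1.1 ⊆ q.2.1 → (∀ x ∈ q.1.1, f x = 0) ∧ ∀ x ∉ q.2.1, f x = 1) := by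
    intro q
    by_cases hq : closure q.1.1 ⊆ q.2.1
    · obtain ⟨f, h0, h1, h01⟩ := exists_continuous_zero_one_of_isClosed
        (isClosed_closure (s := q.1.1)) (hB.isOpen q.2.2).isClosed_compl
        (Set.disjoint_compl_right_iff_subset.2 hq)
      refine ⟨fun x => ⟨f x, h01 x⟩, f.continuous.subtype_mk _, fun _ => ⟨?_, ?_⟩⟩
      · intro x hx
        exact Subtype.ext (h0 (subset_closure hx))
      · intro x hx
        exact Subtype.ext (h1 hx)
    · exact ⟨fun _ => 0, continuous_const, fun h => absurd h hq⟩
  choose f hfc hf using hex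
  obtain ⟨G, hG⟩ := par_exists_card hcard2 f
  refine par_final f hfc ?_ G hG
  intro x y hxy
  by_contra hne
  obtain ⟨V, hV, hxV, hVy⟩ := hB.exists_subset_of_mem_open
    (show x ∈ ({y}ᶜ : Set X) from hne) isOpen_compl_singleton
  obtain ⟨U, hU, hxU, hUV⟩ := hB.exists_closure_subset (hB.mem_nhds hV hxV)
  have h := hf (⟨U, hU⟩, ⟨V, hV⟩) hUV
  have h1 := h.1 x hxU
  have h2 := h.2 y (fun hy => hVy hy rfl)
  rw [hxy, h2] at h1
  exact one_ne_zero h1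
end
end

section
/- (Maćkowiak–Tymchatyn) Every metric continuum is the weakly confluent image of a hereditarily indecomposable metric continuum: for every nonempty compact connected metric space X there exist a nonempty compact connected metrizable hereditarily indecomposable space Y and a weakly confluent continuous surjection from Y onto X. -/
open Set Topology Function

universe u

/-- A space is hereditarily indecomposable if whenever two subcontinua
(nonempty closed connected subsets) meet, one contains the other. -/
def HereditarilyIndecomposable (X : Type*) [TopologicalSpace X] : Prop :=
  ∀ A B : Set X, IsClosed A → IsConnected A → IsClosed B → IsConnected B →
    (A ∩ B).Nonempty → A ⊆ B ∨ B ⊆ A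

/-- A continuous surjection `f : Y → X` is weakly confluent if every subcontinuum
(nonempty closed connected subset) of `X` is the image of a subcontinuum of `Y`. -/
def WeaklyConfluent {Y X : Type*} [TopologicalSpace Y] [TopologicalSpace X]
    (f : Y → X) : Prop :=
  ∀ K : Set X, IsClosed K → IsConnected K →
    ∃ L : Set Y, IsClosed L ∧ IsConnected L ∧ f '' L = K

open Filter

namespace MTproof

/-! ### General topology -/

lemma connected_iInter {E : Type*} [TopologicalSpace E] [CompactSpace E] [T2Space E]
    (K : ℕ → Set E) (hanti : Antitone K) (hcl : ∀ n, IsClosed (K n))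
    (hc : ∀ n, IsConnected (K n)) : IsConnected (⋂ n, K n) := by
  have hdir : Directed (fun a b : Set E => a ⊇ b) K := hanti.directed_ge
  refine ⟨IsCompact.nonempty_iInter_of_directed_nonempty_isCompact_isClosed K hdir
    (fun n => (hc n).nonempty) (fun n => (hcl n).isCompact) hcl, ?_⟩
  rw [isPreconnected_closed_iff]
  intro A B hA hB hAB hnA hnB
  by_contra hne
  have hcI : IsClosed (⋂ n, K n) := isClosed_iInter hcl
  have hdisj : Disjoint ((⋂ n, K n) ∩ A) ((⋂ n, K n) ∩ B) := by
    rw [Set.disjoint_left]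
    rintro x ⟨hx, hxA⟩ ⟨-, hxB⟩
    exact hne ⟨x, hx, hxA, hxB⟩
  obtain ⟨U, V, hU, hV, hAU, hBV, hUV⟩ :=
    normal_separation (hcI.inter hA) (hcI.inter hB) hdisj
  obtain ⟨n, hn⟩ := exists_subset_nhds_of_isCompact' hdir (fun n => (hcl n).isCompact) hcl
    (U := U ∪ V) (by
      intro x hx
      apply (hU.union hV).mem_nhds
      rcases hAB hx with h | h
      · exact Or.inl (hAU ⟨hx, h⟩)
      · exact Or.inr (hBV ⟨hx, h⟩))
  obtain ⟨a, ha, haA⟩ := hnA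
  obtain ⟨b, hb, hbB⟩ := hnB
  obtain ⟨x, -, hxU, hxV⟩ := (hc n).isPreconnected U V hU hV hn
    ⟨a, mem_iInter.1 ha n, hAU ⟨ha, haA⟩⟩ ⟨b, mem_iInter.1 hb n, hBV ⟨hb, hbB⟩⟩
  exact Set.disjoint_left.1 hUV hxU hxV

lemma clopen_sep {E : Type*} [TopologicalSpace E] [T2Space E] {F O : Set E} {z : E}
    (hF : IsCompact F) (hz : z ∈ F) (hO : IsOpen O) (h : connectedComponentIn F z ⊆ O) :
    ∃ D ⊆ F, IsClosed D ∧ IsClosed (F \ D) ∧ z ∈ D ∧ D ⊆ O := by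
  have : CompactSpace F := isCompact_iff_compactSpace.1 hF
  rw [connectedComponentIn_eq_image hz] at h
  have h1 : connectedComponent (⟨z, hz⟩ : F) ⊆ (Subtype.val ⁻¹' O : Set F) :=
    fun x hx => h ⟨x, hx, rfl⟩
  rw [connectedComponent_eq_iInter_isClopen] at h1
  have hO' : IsOpen (Subtype.val ⁻¹' O : Set F) := hO.preimage continuous_subtype_val
  have : Nonempty { s : Set F // IsClopen s ∧ (⟨z, hz⟩ : F) ∈ s } :=
    ⟨⟨univ, isClopen_univ, mem_univ _⟩⟩
  obtain ⟨D, hD⟩ := exists_subset_nhds_of_isCompact'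
    (V := fun s : { s : Set F // IsClopen s ∧ (⟨z, hz⟩ : F) ∈ s } => (s : Set F))
    (U := (Subtype.val ⁻¹' O : Set F))
    (fun a b => ⟨⟨a.1 ∩ b.1, a.2.1.inter b.2.1, a.2.2, b.2.2⟩, inter_subset_left,
      inter_subset_right⟩)
    (fun s => s.2.1.1.isCompact) (fun s => s.2.1.1) (fun x hx => hO'.mem_nhds (h1 hx))
  have himg : ∀ s : Set F, IsClosed s → IsClosed (Subtype.val '' s : Set E) := fun s hs =>
    (hs.isCompact.image continuous_subtype_val).isClosed
  refine ⟨Subtype.val '' D.1, by rintro _ ⟨x, -, rfl⟩; exact x.2, himg _ D.2.1.1, ?_,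
    ⟨⟨z, hz⟩, D.2.2, rfl⟩, by rintro _ ⟨x, hx, rfl⟩; exact hD hx⟩
  have : F \ (Subtype.val '' D.1) = Subtype.val '' (D.1ᶜ) := by
    ext x
    constructor
    · rintro ⟨hx, hxD⟩
      exact ⟨⟨x, hx⟩, fun h => hxD ⟨_, h, rfl⟩, rfl⟩
    · rintro ⟨y, hy, rfl⟩
      refine ⟨y.2, ?_⟩
      rintro ⟨w, hw, hwy⟩
      exact hy (Subtype.ext hwy ▸ hw)
  rw [this]
  exact himg _ D.2.1.compl.1

lemma isClosed_component {E : Type*} [TopologicalSpace E] {F : Set E} (hF : IsClosed F) (z : E) :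
    IsClosed (connectedComponentIn F z) := by
  by_cases hz : z ∈ F
  · refine isClosed_of_closure_subset ?_
    exact isPreconnected_connectedComponentIn.closure.subset_connectedComponentIn
      (subset_closure (mem_connectedComponentIn hz))
      (closure_minimal (connectedComponentIn_subset _ _) hF)
  · rw [connectedComponentIn_eq_empty hz]; exact isClosed_empty

/-! ### The degree -/

open Classical in
/-- Integer valued indicator function. -/
noncomputable def chi {E : Type*} (C : Set E) (y : E) : ℤ := if y ∈ C then 1 else 0

lemma chi_of_mem {E : Type*} {C : Set E} {y : E} (h : y ∈ C) : chi C y = 1 := if_pos h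

lemma chi_of_notMem {E : Type*} {C : Set E} {y : E} (h : y ∉ C) : chi C y = 0 := if_neg h

lemma chi_add {E : Type*} (C D : Set E) (y : E) : chi C y = chi (C ∩ D) y + chi (C \ D) y := by
  unfold chi
  by_cases h1 : y ∈ C <;> by_cases h2 : y ∈ D <;> simp [h1, h2]

lemma chi_continuousOn {E : Type*} [TopologicalSpace E] {C F : Set E} (hCF : C ⊆ F)
    (hC : IsClosed C) (hFC : IsClosed (F \ C)) : ContinuousOn (chi C) F := by
  have h : F = C ∪ (F \ C) := (union_sdiff_cancel hCF).symm
  rw [h]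
  refine ContinuousOn.union_of_isClosed ?_ ?_ hC hFC
  · exact (continuousOn_const (c := (1 : ℤ))).congr fun y hy => chi_of_mem hy
  · exact (continuousOn_const (c := (0 : ℤ))).congr fun y hy => chi_of_notMem hy.2

/-- The degree of `C` over `y`. -/
noncomputable def dg {E : Type*} (φ : E → ℝ) (s0 s1 s2 : E → E) (C : Set E) (y : E) : ℤ :=
  if φ y ≤ 1/3 then chi C (s0 y) else
    if φ y ≤ 2/3 then chi C (s0 y) - chi C (s1 y) + chi C (s2 y) else chi C (s2 y)

lemma dg_add {E : Type*} (φ : E → ℝ) (s0 s1 s2 : E → E) (C D : Set E) (y : E) :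
    dg φ s0 s1 s2 C y = dg φ s0 s1 s2 (C ∩ D) y + dg φ s0 s1 s2 (C \ D) y := by
  unfold dg
  rw [chi_add C D (s0 y), chi_add C D (s1 y), chi_add C D (s2 y)]
  split_ifs <;> ring

/-- The set `F` contains the sheets over `K`. -/
def Sheets {E : Type*} (φ : E → ℝ) (s0 s1 s2 : E → E) (K F : Set E) : Prop :=
  ∀ y ∈ K, (φ y ≤ 2/3 → s0 y ∈ F) ∧ (1/3 ≤ φ y → φ y ≤ 2/3 → s1 y ∈ F) ∧ (1/3 ≤ φ y → s2 y ∈ F)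

lemma dg_congr {E : Type*} {φ : E → ℝ} {s0 s1 s2 : E → E} {K F : Set E}
    (h : Sheets φ s0 s1 s2 K F) {A C : Set E} (hAC : ∀ x ∈ F, x ∈ A ↔ x ∈ C) {y : E}
    (hy : y ∈ K) : dg φ s0 s1 s2 A y = dg φ s0 s1 s2 C y := by
  have key : ∀ x ∈ F, chi A x = chi C x := by
    intro x hx
    by_cases h : x ∈ A
    · rw [chi_of_mem h, chi_of_mem ((hAC x hx).1 h)]
    · rw [chi_of_notMem h, chi_of_notMem fun h' => h ((hAC x hx).2 h')]
  obtain ⟨h0, h1, h2⟩ := h y hy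
  unfold dg
  split_ifs with c1 c2
  · exact key _ (h0 (by linarith))
  · push Not at c1
    rw [key _ (h0 c2), key _ (h1 c1.le c2), key _ (h2 c1.le)]
  · push Not at c1
    exact key _ (h2 c1.le)

lemma dg_const {E : Type*} [TopologicalSpace E] {φ : E → ℝ} {s0 s1 s2 : E → E}
    (hφ : Continuous φ) (h0 : Continuous s0) (h1 : Continuous s1) (h2 : Continuous s2)
    (h01 : ∀ y, φ y = 2/3 → s0 y = s1 y) (h12 : ∀ y, φ y = 1/3 → s1 y = s2 y)
    {K F C : Set E} (hK : IsClosed K) (hKc : IsPreconnected K)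
    (hs : Sheets φ s0 s1 s2 K F) (hCF : C ⊆ F) (hC : IsClosed C) (hFC : IsClosed (F \ C))
    {x y : E} (hx : x ∈ K) (hy : y ∈ K) : dg φ s0 s1 s2 C x = dg φ s0 s1 s2 C y := by
  have hchi := chi_continuousOn hCF hC hFC
  have c1 : IsClosed (K ∩ {y | φ y ≤ 1/3}) := hK.inter (isClosed_le hφ continuous_const)
  have c2 : IsClosed (K ∩ {y | 1/3 ≤ φ y ∧ φ y ≤ 2/3}) :=
    hK.inter ((isClosed_le continuous_const hφ).inter (isClosed_le hφ continuous_const))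
  have c3 : IsClosed (K ∩ {y | 2/3 ≤ φ y}) := hK.inter (isClosed_le continuous_const hφ)
  have hKeq : K = (K ∩ {y | φ y ≤ 1/3}) ∪ (K ∩ {y | 1/3 ≤ φ y ∧ φ y ≤ 2/3}) ∪
      (K ∩ {y | 2/3 ≤ φ y}) := by
    ext z
    simp only [mem_union, mem_inter_iff, mem_ofPred_eq]
    constructor
    · intro hz
      rcases le_total (φ z) (1/3) with h | h
      · exact Or.inl (Or.inl ⟨hz, h⟩)
      · rcases le_total (φ z) (2/3) with h' | h'
        · exact Or.inl (Or.inr ⟨hz, h, h'⟩)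
        · exact Or.inr ⟨hz, h'⟩
    · tauto
  have hcont : ContinuousOn (dg φ s0 s1 s2 C) K := by
    rw [hKeq]
    refine ContinuousOn.union_of_isClosed (ContinuousOn.union_of_isClosed ?_ ?_ c1 c2) ?_
      (c1.union c2) c3
    · refine (hchi.comp h0.continuousOn (s := K ∩ {y | φ y ≤ 1/3}) ?_).congr ?_
      · rintro z ⟨hz, hz'⟩
        simp only [mem_ofPred_eq] at hz'
        exact (hs z hz).1 (by linarith)
      · rintro z ⟨hz, hz'⟩
        exact if_pos hz'
    · have e0 := hchi.comp h0.continuousOn (s := K ∩ {y | 1/3 ≤ φ y ∧ φ y ≤ 2/3})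
        (fun z hz => (hs z hz.1).1 hz.2.2)
      have e1 := hchi.comp h1.continuousOn (s := K ∩ {y | 1/3 ≤ φ y ∧ φ y ≤ 2/3})
        (fun z hz => (hs z hz.1).2.1 hz.2.1 hz.2.2)
      have e2 := hchi.comp h2.continuousOn (s := K ∩ {y | 1/3 ≤ φ y ∧ φ y ≤ 2/3})
        (fun z hz => (hs z hz.1).2.2 hz.2.1)
      refine ((e0.sub e1).add e2).congr ?_
      rintro z ⟨hz, hz1, hz2⟩
      simp only [dg, Function.comp, Pi.add_apply, Pi.sub_apply]
      split_ifs with c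
      · rw [h12 z (le_antisymm c hz1)]; ring
      · rfl
    · refine (hchi.comp h2.continuousOn (s := K ∩ {y | 2/3 ≤ φ y}) ?_).congr ?_
      · rintro z ⟨hz, hz'⟩
        simp only [mem_ofPred_eq] at hz'
        exact (hs z hz).2.2 (by linarith)
      · rintro z ⟨hz, hz'⟩
        simp only [mem_ofPred_eq] at hz'
        simp only [dg, Function.comp]
        split_ifs with c c'
        · linarith
        · rw [h01 z (le_antisymm c' hz')]; ring
        · rfl
  exact hKc.constant hcont hx hy

lemma lift_abstract {E : Type*} [TopologicalSpace E] [CompactSpace E] [T2Space E]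
    {φ : E → ℝ} {s0 s1 s2 : E → E}
    (hφ : Continuous φ) (h0 : Continuous s0) (h1 : Continuous s1) (h2 : Continuous s2)
    (h01 : ∀ y, φ y = 2/3 → s0 y = s1 y) (h12 : ∀ y, φ y = 1/3 → s1 y = s2 y)
    {G S K : Set E} (hG : IsClosed G) (hS : IsClosed S) (hSc : IsPreconnected S)
    (hSs : Sheets φ s0 s1 s2 S (S ∩ G)) {p : E} (hp : p ∈ S) (hp3 : φ p ≤ 1/3)
    (hKS : K ⊆ S) (hK : IsClosed K) (hKc : IsConnected K)
    (hKs : Sheets φ s0 s1 s2 K (K ∩ G)) :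
    ∃ z ∈ K ∩ G, z ∈ connectedComponentIn (S ∩ G) (s0 p) ∧
      ∀ y ∈ K, ∃ y' ∈ connectedComponentIn (K ∩ G) z, y' = s0 y ∨ y' = s1 y ∨ y' = s2 y := by
  by_contra hcon
  push Not at hcon
  have hp' : s0 p ∈ S ∩ G := (hSs p hp).1 (by linarith)
  have hSG : IsClosed (S ∩ G) := hS.inter hG
  have hKG : IsClosed (K ∩ G) := hK.inter hG
  have hcomp : IsClosed (connectedComponentIn (S ∩ G) (s0 p)) := isClosed_component hSG _
  set P : Set E → Prop := fun T => ∃ D ⊆ K ∩ G, IsClosed D ∧ IsClosed ((K ∩ G) \ D) ∧ T ⊆ D ∧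
    ∀ C ⊆ D, IsClosed C → IsClosed ((K ∩ G) \ C) → ∀ y ∈ K, dg φ s0 s1 s2 C y = 0 with hP
  have hPT : P ((K ∩ G) ∩ connectedComponentIn (S ∩ G) (s0 p)) := by
    refine (hKG.inter hcomp).isCompact.induction_on (p := P) ?_ ?_ ?_ ?_
    · refine ⟨∅, empty_subset _, isClosed_empty, by simpa using hKG, Subset.rfl, ?_⟩
      intro C hC _ _ y _
      rw [subset_empty_iff.1 hC]
      simp [dg, chi]
    · rintro s t hst ⟨D, hD, hD1, hD2, hD3, hD4⟩
      exact ⟨D, hD, hD1, hD2, hst.trans hD3, hD4⟩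
    · rintro s t ⟨D, hD, hD1, hD2, hD3, hD4⟩ ⟨D', hD', hD1', hD2', hD3', hD4'⟩
      refine ⟨D ∪ D', union_subset hD hD', hD1.union hD1', ?_, union_subset_union hD3 hD3', ?_⟩
      · rw [← sdiff_inter_sdiff]
        exact hD2.inter hD2'
      · intro C hC hC1 hC2 y hy
        have hCF : C ⊆ K ∩ G := hC.trans (union_subset hD hD')
        rw [dg_add φ s0 s1 s2 C D y, hD4 (C ∩ D) inter_subset_right (hC1.inter hD1) ?_ y hy,
          hD4' (C \ D) ?_ ?_ ?_ y hy, add_zero]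
        · rintro x ⟨hx, hx'⟩
          exact (hC hx).resolve_left hx'
        · have : C \ D = C ∩ ((K ∩ G) \ D) := by
            ext x
            constructor
            · rintro ⟨a, b⟩; exact ⟨a, hCF a, b⟩
            · rintro ⟨a, _, b⟩; exact ⟨a, b⟩
          rw [this]
          exact hC1.inter hD2
        · have : (K ∩ G) \ (C \ D) = ((K ∩ G) \ C) ∪ D := by
            ext x
            constructor
            · rintro ⟨a, b⟩
              by_cases hx : x ∈ D
              · exact Or.inr hx
              · exact Or.inl ⟨a, fun h => b ⟨h, hx⟩⟩
            · rintro (⟨a, b⟩ | a)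
              · exact ⟨a, fun h => b h.1⟩
              · exact ⟨hD a, fun h => h.2 a⟩
          rw [this]
          exact hC2.union hD1
        · rw [sdiff_inter]
          exact hC2.union hD2
    · rintro z ⟨hz, hzS⟩
      obtain ⟨y, hy, hyn⟩ := hcon z hz hzS
      obtain ⟨D, hD, hD1, hD2, hzD, hDO⟩ := clopen_sep (O := ({s0 y, s1 y, s2 y} : Set E)ᶜ)
        hKG.isCompact hz (Set.toFinite _).isClosed.isOpen_compl (by
          intro x hx hx'
          obtain ⟨a, b, c⟩ := hyn x hx
          rcases hx' with h | h | h
          · exact a h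
          · exact b h
          · exact c h)
      refine ⟨D, ?_, D, hD, hD1, hD2, Subset.rfl, ?_⟩
      · have : ((K ∩ G) \ D)ᶜ ∈ 𝓝 z := hD2.isOpen_compl.mem_nhds (fun h => h.2 hzD)
        refine mem_nhdsWithin_iff_exists_mem_nhds_inter.2 ⟨_, this, ?_⟩
        rintro x ⟨hx, hx', -⟩
        by_contra hxD
        exact hx ⟨hx', hxD⟩
      · intro C hC hC1 hC2 x hx
        rw [dg_const hφ h0 h1 h2 h01 h12 hK hKc.isPreconnected hKs (hC.trans hD) hC1 hC2 hx hy]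
        have e0 : s0 y ∉ C := fun h => hDO (hC h) (by simp)
        have e1 : s1 y ∉ C := fun h => hDO (hC h) (by simp)
        have e2 : s2 y ∉ C := fun h => hDO (hC h) (by simp)
        simp [dg, chi_of_notMem e0, chi_of_notMem e1, chi_of_notMem e2]
  obtain ⟨D, hD, hD1, hD2, hD3, hD4⟩ := hPT
  obtain ⟨A, hA, hA1, hA2, hpA, hAO⟩ := clopen_sep (O := ((K ∩ G) \ D)ᶜ) hSG.isCompact hp'
    hD2.isOpen_compl (fun x hx hx' => hx'.2 (hD3 ⟨hx'.1, hx⟩))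
  obtain ⟨y, hy⟩ := hKc.nonempty
  have q1 : dg φ s0 s1 s2 A y = dg φ s0 s1 s2 A p :=
    dg_const hφ h0 h1 h2 h01 h12 hS hSc hSs hA hA1 hA2 (hKS hy) hp
  have q2 : dg φ s0 s1 s2 A p = 1 := by
    rw [dg, if_pos hp3, chi_of_mem hpA]
  have q3 : dg φ s0 s1 s2 A y = dg φ s0 s1 s2 (A ∩ (K ∩ G)) y :=
    dg_congr hKs (A := A) (C := A ∩ (K ∩ G)) (fun x hx => ⟨fun h => ⟨h, hx⟩, fun h => h.1⟩) hy
  have q4 : dg φ s0 s1 s2 (A ∩ (K ∩ G)) y = 0 := by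
    refine hD4 _ ?_ (hA1.inter hKG) ?_ y hy
    · rintro x ⟨hx, hx'⟩
      by_contra hxD
      exact hAO hx ⟨hx', hxD⟩
    · have : (K ∩ G) \ (A ∩ (K ∩ G)) = (K ∩ G) ∩ ((S ∩ G) \ A) := by
        ext x
        constructor
        · rintro ⟨a, b⟩
          exact ⟨a, ⟨hKS a.1, a.2⟩, fun h => b ⟨h, a⟩⟩
        · rintro ⟨a, _, b⟩
          exact ⟨a, fun h => b h.1⟩
      rw [this]
      exact hKG.inter hA2
  omega

/-! ### The concrete construction -/

/-- The zigzag function. -/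
noncomputable def zz (s : ℝ) : ℝ := max (min (2 * s) (1 - s)) (2 * s - 1)

lemma zz_continuous : Continuous zz := by unfold zz; fun_prop

lemma zz0 {v : ℝ} (h : v ≤ 2/3) : zz (v / 2) = v := by
  unfold zz
  rw [min_eq_left (by linarith), max_eq_left (by linarith)]; ring

lemma zz1 {v : ℝ} (h : 1/3 ≤ v) (h' : v ≤ 2/3) : zz (1 - v) = v := by
  unfold zz
  rw [min_eq_right (by linarith), max_eq_left (by linarith)]; ring

lemma zz2 {v : ℝ} (h : 1/3 ≤ v) : zz ((1 + v) / 2) = v := by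
  unfold zz
  rw [min_eq_right (by linarith), max_eq_right (by linarith)]; ring

lemma zz_lt {s : ℝ} (h : zz s < 1/3) : s < 1/3 := by
  unfold zz at h
  obtain ⟨h1, h2⟩ := max_lt_iff.1 h
  rcases min_lt_iff.1 h1 with h | h <;> linarith

lemma zz_gt {s : ℝ} (h : 2/3 < zz s) : 2/3 < s := by
  unfold zz at h
  rcases lt_max_iff.1 h with h | h
  · obtain ⟨h1, h2⟩ := lt_min_iff.1 h
    linarith
  · linarith

section
variable {X : Type u}

/-- Two points agree on the base and on the first `n` coordinates. -/
def Agree (n : ℕ) (y y' : X × (ℕ → unitInterval)) : Prop :=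
  y'.1 = y.1 ∧ ∀ i < n, y'.2 i = y.2 i

/-- Closed connected sets which depend on the first `n` coordinates only. -/
def Good [TopologicalSpace X] (n : ℕ) (S : Set (X × (ℕ → unitInterval))) : Prop :=
  IsClosed S ∧ IsConnected S ∧ ∀ y ∈ S, ∀ y', Agree n y y' → y' ∈ S

lemma Agree.mono {m n : ℕ} (h : m ≤ n) {y y' : X × (ℕ → unitInterval)} (ha : Agree n y y') :
    Agree m y y' := ⟨ha.1, fun i hi => ha.2 i (hi.trans_le h)⟩

/-- Replace the `n`-th coordinate. -/
def upd (n : ℕ) (c : X × (ℕ → unitInterval) → unitInterval) (y : X × (ℕ → unitInterval)) :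
    X × (ℕ → unitInterval) := (y.1, Function.update y.2 n (c y))

lemma agree_upd (n : ℕ) (c : X × (ℕ → unitInterval) → unitInterval)
    (y : X × (ℕ → unitInterval)) : Agree n y (upd n c y) :=
  ⟨rfl, fun i hi => by simp [upd, hi.ne]⟩

lemma component_free [TopologicalSpace X] {n : ℕ} {S : Set (X × (ℕ → unitInterval))}
    (hS : ∀ y ∈ S, ∀ y', Agree n y y' → y' ∈ S) {z : X × (ℕ → unitInterval)} :
    ∀ y ∈ connectedComponentIn S z, ∀ y', Agree n y y' → y' ∈ connectedComponentIn S z := by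
  intro y hy y' hyy'
  have hyS := connectedComponentIn_subset _ _ hy
  rw [connectedComponentIn_eq hy]
  set m : (ℕ → unitInterval) → X × (ℕ → unitInterval) :=
    fun t => (y.1, fun i => if i < n then y.2 i else t i) with hm
  have hmc : Continuous m := by
    refine continuous_const.prodMk (continuous_pi fun i => ?_)
    by_cases h : i < n
    · simp only [h, if_true]; exact continuous_const
    · simp only [h, if_false]; exact continuous_apply i
  have hpre : IsPreconnected (range m) := isPreconnected_range hmc
  have hsub : range m ⊆ S := by
    rintro _ ⟨t, rfl⟩
    exact hS y hyS _ ⟨rfl, fun i hi => by simp [hm, hi]⟩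
  refine hpre.subset_connectedComponentIn ⟨y.2, ?_⟩ hsub ⟨y'.2, ?_⟩
  · simp [hm]
  · refine Prod.ext hyy'.1.symm (funext fun i => ?_)
    by_cases h : i < n
    · simp [hm, h, hyy'.2 i h]
    · simp [hm, h]

lemma step [MetricSpace X] [CompactSpace X] (n : ℕ) (f : C(X × (ℕ → unitInterval), unitInterval))
    (hf : ∀ y y', Agree n y y' → f y' = f y) (S : Set (X × (ℕ → unitInterval)))
    (hS : Good n S) :
    ∃ S' ⊆ S, Good (n + 1) S' ∧
      ((∃ p ∈ S, (f p : ℝ) ≤ 1/3) → ∀ y ∈ S', zz (y.2 n) = f y) ∧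
      ∀ K ⊆ S, Good n K → ∃ K' ⊆ K, K' ⊆ S' ∧ Good (n + 1) K' ∧ ∀ y ∈ K, ∃ y' ∈ K', Agree n y y' := by
  by_cases hp : ∃ p ∈ S, (f p : ℝ) ≤ 1/3
  swap
  · have hmono : ∀ T : Set (X × (ℕ → unitInterval)), Good n T → Good (n + 1) T := fun T hT =>
      ⟨hT.1, hT.2.1, fun y hy y' h => hT.2.2 y hy y' (h.mono n.le_succ)⟩
    exact ⟨S, Subset.rfl, hmono S hS, fun h => absurd h hp, fun K hKS hK =>
      ⟨K, Subset.rfl, hKS, hmono K hK, fun y hy => ⟨y, hy, rfl, fun _ _ => rfl⟩⟩⟩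
  obtain ⟨p, hpS, hp3⟩ := hp
  have h01 : (0 : ℝ) ≤ 1 := zero_le_one
  set φ : X × (ℕ → unitInterval) → ℝ := fun y => (f y : ℝ) with hφ
  have hφc : Continuous φ := continuous_subtype_val.comp f.continuous
  have φ0 : ∀ y, 0 ≤ φ y := fun y => (f y).2.1
  have φ1 : ∀ y, φ y ≤ 1 := fun y => (f y).2.2
  set s0 := upd (X := X) n (fun y => projIcc 0 1 h01 (φ y / 2)) with hs0
  set s1 := upd (X := X) n (fun y => projIcc 0 1 h01 (1 - φ y)) with hs1
  set s2 := upd (X := X) n (fun y => projIcc 0 1 h01 ((1 + φ y) / 2)) with hs2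
  have hcont : ∀ c : X × (ℕ → unitInterval) → ℝ, Continuous c →
      Continuous (upd (X := X) n (fun y => projIcc 0 1 h01 (c y))) := fun c hc =>
    continuous_fst.prodMk (continuous_snd.update n (continuous_projIcc.comp hc))
  have c0 : Continuous s0 := hcont _ (by fun_prop)
  have c1 : Continuous s1 := hcont _ (by fun_prop)
  have c2 : Continuous s2 := hcont _ (by fun_prop)
  have e01 : ∀ y, φ y = 2/3 → s0 y = s1 y := by
    intro y hy
    simp only [hs0, hs1, upd, hy]; norm_num
  have e12 : ∀ y, φ y = 1/3 → s1 y = s2 y := by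
    intro y hy
    simp only [hs1, hs2, upd, hy]; norm_num
  set G : Set (X × (ℕ → unitInterval)) := {y | zz (y.2 n) = φ y} with hGdef
  have hG : IsClosed G := by
    refine isClosed_eq (zz_continuous.comp ?_) hφc
    exact continuous_subtype_val.comp ((continuous_apply n).comp continuous_snd)
  have hφu : ∀ c y, φ (upd n c y) = φ y := fun c y => by
    simp only [hφ]; rw [hf _ _ (agree_upd n c y)]
  have hco : ∀ (c : X × (ℕ → unitInterval) → ℝ) y, 0 ≤ c y → c y ≤ 1 →
      (((upd (X := X) n (fun y => projIcc 0 1 h01 (c y)) y).2 n : unitInterval) : ℝ) = c y := by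
    intro c y h h'
    simp only [upd, Function.update_self]
    rw [projIcc_of_mem h01 ⟨h, h'⟩]
  have hsheets : ∀ T, Good n T → Sheets φ s0 s1 s2 T (T ∩ G) := by
    intro T hT y hy
    refine ⟨fun h => ⟨hT.2.2 y hy _ (agree_upd _ _ _), ?_⟩,
      fun h h' => ⟨hT.2.2 y hy _ (agree_upd _ _ _), ?_⟩,
      fun h => ⟨hT.2.2 y hy _ (agree_upd _ _ _), ?_⟩⟩
    · simp only [hGdef, mem_ofPred_eq, hs0]
      rw [hφu, hco _ _ (by linarith [φ0 y]) (by linarith [φ1 y]), zz0 h]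
    · simp only [hGdef, mem_ofPred_eq, hs1]
      rw [hφu, hco _ _ (by linarith [φ1 y]) (by linarith [φ0 y]), zz1 h h']
    · simp only [hGdef, mem_ofPred_eq, hs2]
      rw [hφu, hco _ _ (by linarith [φ0 y]) (by linarith [φ1 y]), zz2 h]
  have hfree : ∀ T, Good n T → ∀ y ∈ T ∩ G, ∀ y', Agree (n + 1) y y' → y' ∈ T ∩ G := by
    rintro T hT y ⟨hy, hyG⟩ y' h
    refine ⟨hT.2.2 y hy y' (h.mono n.le_succ), ?_⟩
    simp only [hGdef, mem_ofPred_eq, hφ] at hyG ⊢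
    rw [h.2 n n.lt_succ_self, hyG, hf _ _ (h.mono n.le_succ)]
  have hgood : ∀ T, Good n T → ∀ z ∈ T ∩ G, Good (n + 1) (connectedComponentIn (T ∩ G) z) :=
    fun T hT z hz => ⟨isClosed_component (hT.1.inter hG) z,
      isConnected_connectedComponentIn_iff.2 hz, component_free (hfree T hT)⟩
  have hp' : s0 p ∈ S ∩ G := (hsheets S hS p hpS).1 (by simp only [hφ]; linarith)
  refine ⟨connectedComponentIn (S ∩ G) (s0 p), (connectedComponentIn_subset _ _).trans
    inter_subset_left, hgood S hS _ hp', fun _ y hy => (connectedComponentIn_subset _ _ hy).2, ?_⟩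
  intro K hKS hK
  obtain ⟨z, hz, hzS, hz'⟩ := lift_abstract hφc c0 c1 c2 e01 e12 hG hS.1 hS.2.1.isPreconnected
    (hsheets S hS) hpS hp3 hKS hK.1 hK.2.1 (hsheets K hK)
  refine ⟨connectedComponentIn (K ∩ G) z, (connectedComponentIn_subset _ _).trans
    inter_subset_left, ?_, hgood K hK z hz, ?_⟩
  · rw [connectedComponentIn_eq hzS]
    exact connectedComponentIn_mono _ (inter_subset_inter_left _ hKS)
  · intro y hy
    obtain ⟨y', hy', h⟩ := hz' y hy
    refine ⟨y', hy', ?_⟩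
    rcases h with rfl | rfl | rfl <;> exact agree_upd _ _ _

/-- Set all coordinates from `n` on to zero. -/
def trunc (n : ℕ) (y : X × (ℕ → unitInterval)) : X × (ℕ → unitInterval) :=
  (y.1, fun i => if i < n then y.2 i else 0)

lemma trunc_continuous [TopologicalSpace X] (n : ℕ) : Continuous (trunc (X := X) n) := by
  refine continuous_fst.prodMk (continuous_pi fun i => ?_)
  by_cases h : i < n
  · simp only [h, if_true]; exact (continuous_apply i).comp continuous_snd
  · simp only [h, if_false]; exact continuous_const

lemma trunc_tendsto [MetricSpace X] :
    TendstoUniformly (fun n => trunc (X := X) n) id atTop := by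
  rw [tendstoUniformly_iff_tendsto, uniformity_prod, tendsto_inf]
  constructor
  · rw [tendsto_comap_iff]
    exact tendsto_iff_forall_eventually_mem.2 fun s hs =>
      Eventually.of_forall fun q => refl_mem_uniformity hs
  · rw [tendsto_comap_iff, Pi.uniformity, tendsto_iInf]
    intro i
    rw [tendsto_comap_iff]
    refine tendsto_iff_forall_eventually_mem.2 fun s hs => ?_
    have : ∀ᶠ n : ℕ in atTop, i < n := eventually_gt_atTop i
    filter_upwards [this.prod_inl (⊤ : Filter (X × (ℕ → unitInterval)))] with q hq
    simp only [Function.comp, trunc, hq, if_true, id]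
    exact refl_mem_uniformity hs

lemma exists_family (X : Type u) [MetricSpace X] [CompactSpace X] :
    ∃ f : ℕ → C(X × (ℕ → unitInterval), unitInterval),
      (∀ n y y', Agree n y y' → f n y' = f n y) ∧
      ∀ h : C(X × (ℕ → unitInterval), unitInterval), ∀ ε > 0, ∃ n, ∀ y, dist (f n y) (h y) < ε := by
  let d := TopologicalSpace.denseSeq C(X × (ℕ → unitInterval), unitInterval)
  refine ⟨fun n => (d n.unpair.1).comp ⟨trunc n, trunc_continuous n⟩, ?_, ?_⟩
  · intro n y y' h
    have : trunc n y' = trunc n y := by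
      refine Prod.ext h.1 (funext fun i => ?_)
      by_cases hi : i < n
      · simp [trunc, hi, h.2 i hi]
      · simp [trunc, hi]
    simp [this]
  · intro h ε hε
    obtain ⟨k, hk⟩ := (TopologicalSpace.denseRange_denseSeq
      C(X × (ℕ → unitInterval), unitInterval)).exists_dist_lt h (half_pos hε)
    have huc : UniformContinuous (d k) :=
      CompactSpace.uniformContinuous_of_continuous (d k).continuous
    have ht := huc.comp_tendstoUniformly (trunc_tendsto (X := X))
    rw [Metric.tendstoUniformly_iff] at ht
    obtain ⟨N, hN⟩ := eventually_atTop.1 (ht (ε / 2) (half_pos hε))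
    refine ⟨Nat.pair k N, fun y => ?_⟩
    have h1 := hN (Nat.pair k N) (Nat.right_le_pair k N) y
    have h2 : dist (h y) (d k y) < ε / 2 := (ContinuousMap.dist_apply_le_dist y).trans_lt hk
    simp only [Function.comp, id] at h1
    simp only [Nat.unpair_pair, ContinuousMap.comp_apply, ContinuousMap.coe_mk]
    calc _ ≤ dist (d k (trunc (Nat.pair k N) y)) (d k y) + dist (d k y) (h y) :=
          dist_triangle _ _ _
      _ < ε := by rw [dist_comm, dist_comm (d k y) (h y)]; linarith

/-- Separation of two continua by a function from the family. -/
lemma exists_sep [MetricSpace X] [CompactSpace X]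
    (A B : Set (X × (ℕ → unitInterval))) (hA : IsClosed A) (hB : IsClosed B)
    {a b : X × (ℕ → unitInterval)} (ha : a ∉ B) (hb : b ∉ A) :
    ∃ h : C(X × (ℕ → unitInterval), unitInterval), (a ∈ A → (h a : ℝ) = 0) ∧
      (b ∈ B → (h b : ℝ) = 1) ∧ (∀ y ∈ A, (h y : ℝ) ≤ 1/2) ∧ ∀ y ∈ B, 1/2 ≤ (h y : ℝ) := by
  obtain ⟨u, hu0, hu1, hu⟩ := exists_continuous_zero_one_of_isClosed (isClosed_singleton (x := a))
    hB (Set.disjoint_singleton_left.2 ha)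
  obtain ⟨v, hv0, hv1, hv⟩ := exists_continuous_zero_one_of_isClosed hA
    (isClosed_singleton (x := b)) (Set.disjoint_singleton_right.2 hb)
  refine ⟨⟨fun y => ⟨(u y + v y) / 2, ?_, ?_⟩, ?_⟩, ?_, ?_, ?_, ?_⟩
  · linarith [(hu y).1, (hv y).1]
  · linarith [(hu y).2, (hv y).2]
  · exact Continuous.subtype_mk (by fun_prop) _
  · intro h
    have e1 : u a = 0 := hu0 rfl
    have e2 : v a = 0 := hv0 h
    simp [e1, e2]
  · intro h
    have e1 : u b = 1 := hu1 h
    have e2 : v b = 1 := hv1 rfl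
    simp [e1, e2]
  · intro y hy
    have e2 : v y = 0 := hv0 hy
    simp only [ContinuousMap.coe_mk, e2]
    linarith [(hu y).2]
  · intro y hy
    have e2 : u y = 1 := hu1 hy
    simp only [ContinuousMap.coe_mk, e2]
    linarith [(hv y).1]

/-- The ambient form of the theorem. -/
lemma ambient (X : Type u) [MetricSpace X] [CompactSpace X] [ConnectedSpace X] :
    ∃ Y : Set (X × (ℕ → unitInterval)), IsClosed Y ∧ IsConnected Y ∧
      (∀ A ⊆ Y, ∀ B ⊆ Y, IsClosed A → IsConnected A → IsClosed B → IsConnected B →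
        (A ∩ B).Nonempty → A ⊆ B ∨ B ⊆ A) ∧
      ∀ K : Set X, IsClosed K → IsConnected K →
        ∃ L ⊆ Y, IsClosed L ∧ IsConnected L ∧ Prod.fst '' L = K := by
  obtain ⟨f, hf, hdense⟩ := exists_family X
  choose! T hTS hTG hTz hTK using fun n S hS => step n (f n) (hf n) S hS
  let S : ℕ → Set (X × (ℕ → unitInterval)) := fun n => Nat.rec univ (fun n s => T n s) n
  have hS0 : S 0 = univ := rfl
  have hS1 : ∀ n, S (n + 1) = T n (S n) := fun n => rfl
  have hSg : ∀ n, Good n (S n) := by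
    intro n
    induction n with
    | zero => exact ⟨isClosed_univ, isConnected_univ, fun _ _ _ _ => mem_univ _⟩
    | succ n ih => exact hTG n _ ih
  have hSanti : Antitone S := antitone_nat_of_succ_le fun n => hTS n _ (hSg n)
  refine ⟨⋂ n, S n, isClosed_iInter fun n => (hSg n).1,
    connected_iInter S hSanti (fun n => (hSg n).1) (fun n => (hSg n).2.1), ?_, ?_⟩
  · rintro A hAY B hBY hA hAc hB hBc ⟨c, hcA, hcB⟩
    by_contra hcon
    push Not at hcon
    obtain ⟨h1, h2⟩ := hcon
    obtain ⟨a, haA, haB⟩ := not_subset.1 h1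
    obtain ⟨b, hbB, hbA⟩ := not_subset.1 h2
    obtain ⟨h, ha, hb, hhA, hhB⟩ := exists_sep A B hA hB haB hbA
    obtain ⟨n, hn⟩ := hdense h (1/12) (by norm_num)
    have hn' : ∀ y, |(f n y : ℝ) - h y| < 1/12 := fun y => by
      have := hn y
      rwa [Subtype.dist_eq, Real.dist_eq] at this
    have ha0 := ha haA
    have hb0 := hb hbB
    have fa : (f n a : ℝ) < 1/3 := by have := abs_lt.1 (hn' a); linarith
    have fb : 2/3 < (f n b : ℝ) := by have := abs_lt.1 (hn' b); linarith
    have fA : ∀ y ∈ A, (f n y : ℝ) < 2/3 := fun y hy => by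
      have := abs_lt.1 (hn' y); have := hhA y hy; linarith
    have fB : ∀ y ∈ B, 1/3 < (f n y : ℝ) := fun y hy => by
      have := abs_lt.1 (hn' y); have := hhB y hy; linarith
    have hz : ∀ y ∈ ⋂ n, S n, zz (y.2 n) = f n y := fun y hy =>
      hTz n (S n) (hSg n) ⟨a, mem_iInter.1 (hAY haA) n, fa.le⟩ y (mem_iInter.1 hy (n + 1))
    have hcoord : Continuous fun y : X × (ℕ → unitInterval) => ((y.2 n : unitInterval) : ℝ) :=
      continuous_subtype_val.comp ((continuous_apply n).comp continuous_snd)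
    have k1 : ((c.2 n : unitInterval) : ℝ) < 1/3 := by
      by_contra hge
      push Not at hge
      obtain ⟨y, hy, hy3⟩ := hAc.isPreconnected.intermediate_value haA hcA hcoord.continuousOn
        ⟨(zz_lt (by rw [hz a (hAY haA)]; exact fa)).le, hge⟩
      have e := hz y (hAY hy)
      simp only at hy3
      rw [hy3] at e
      have := fA y hy
      have e2 := zz0 (v := 2/3) le_rfl
      norm_num at e2 e this
      linarith
    have k2 : 2/3 < ((c.2 n : unitInterval) : ℝ) := by
      by_contra hge
      push Not at hge
      obtain ⟨y, hy, hy3⟩ := hBc.isPreconnected.intermediate_value hcB hbB hcoord.continuousOn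
        ⟨hge, (zz_gt (by rw [hz b (hBY hbB)]; exact fb)).le⟩
      have e := hz y (hBY hy)
      simp only at hy3
      rw [hy3] at e
      have := fB y hy
      have e2 := zz2 (v := 1/3) le_rfl
      norm_num at e2 e this
      linarith
    linarith
  · intro K hK hKc
    choose! R hRK hRS hRG hRA using hTK
    let L : ℕ → Set (X × (ℕ → unitInterval)) :=
      fun n => Nat.rec (Prod.fst ⁻¹' K) (fun n s => R n (S n) s) n
    have hL0 : L 0 = Prod.fst ⁻¹' K := rfl
    have hL1 : ∀ n, L (n + 1) = R n (S n) (L n) := fun n => rfl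
    have hL : ∀ n, L n ⊆ S n ∧ Good n (L n) := by
      intro n
      induction n with
      | zero =>
        refine ⟨subset_univ _, hK.preimage continuous_fst, ?_, ?_⟩
        · have : L 0 = K ×ˢ univ := by rw [hL0]; ext; simp
          rw [this]
          exact hKc.prod isConnected_univ
        · intro y hy y' h
          rw [hL0, mem_preimage] at hy ⊢
          rw [h.1]; exact hy
      | succ n ih =>
        exact ⟨hRS n _ (hSg n) _ ih.1 ih.2, hRG n _ (hSg n) _ ih.1 ih.2⟩
    have hLanti : Antitone L :=
      antitone_nat_of_succ_le fun n => hRK n _ (hSg n) _ (hL n).1 (hL n).2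
    have hLcl : ∀ n, IsClosed (L n) := fun n => (hL n).2.1
    refine ⟨⋂ n, L n, iInter_mono fun n => (hL n).1, isClosed_iInter hLcl,
      connected_iInter L hLanti hLcl (fun n => (hL n).2.2.1), ?_⟩
    apply Subset.antisymm
    · rintro _ ⟨y, hy, rfl⟩
      exact mem_iInter.1 hy 0
    · intro x hx
      have hne : ∀ n, (L n ∩ Prod.fst ⁻¹' {x}).Nonempty := by
        intro n
        induction n with
        | zero => exact ⟨(x, fun _ => 0), hx, rfl⟩
        | succ n ih =>
          obtain ⟨y, hy, hyx⟩ := ih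
          obtain ⟨y', hy', h⟩ := hRA n _ (hSg n) _ (hL n).1 (hL n).2 y hy
          exact ⟨y', hy', h.1.trans hyx⟩
      have hcl : ∀ n, IsClosed (L n ∩ Prod.fst ⁻¹' {x}) := fun n =>
        (hLcl n).inter (isClosed_singleton.preimage continuous_fst)
      have hanti : Antitone fun n => L n ∩ Prod.fst ⁻¹' {x} := fun m n h =>
        inter_subset_inter_left _ (hLanti h)
      obtain ⟨y, hy⟩ := IsCompact.nonempty_iInter_of_directed_nonempty_isCompact_isClosed
        (fun n => L n ∩ Prod.fst ⁻¹' {x}) hanti.directed_ge hne (fun n => (hcl n).isCompact) hcl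
      rw [mem_iInter] at hy
      exact ⟨y, mem_iInter.2 fun n => (hy n).1, (hy 0).2⟩

end

end MTproof

/-- (Maćkowiak–Tymchatyn) Every metric continuum is the weakly confluent image of a
hereditarily indecomposable metric continuum. -/
theorem metric_continuum_weakly_confluent_image_of_HI
    (X : Type u) [MetricSpace X] [CompactSpace X] [ConnectedSpace X] [Nonempty X] :
    ∃ (Y : Type u) (tY : TopologicalSpace Y),
      @CompactSpace Y tY ∧ @T2Space Y tY ∧ @ConnectedSpace Y tY ∧ Nonempty Y ∧
      @TopologicalSpace.MetrizableSpace Y tY ∧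
      @HereditarilyIndecomposable Y tY ∧
      ∃ f : Y → X, @Continuous Y X tY _ f ∧ Surjective f ∧
        @WeaklyConfluent Y X tY _ f := by
  obtain ⟨Y, hY, hYc, hHI, hwc⟩ := MTproof.ambient X
  have himg : ∀ s : Set Y, IsClosed s → IsClosed (Subtype.val '' s : Set (X × (ℕ → unitInterval))) :=
    fun s hs => hY.isClosedEmbedding_subtypeVal.isClosedMap s hs
  have hW : WeaklyConfluent (fun y : Y => y.1.1) := by
    intro K hK hKc
    obtain ⟨L, hLY, hL, hLc, hLK⟩ := hwc K hK hKc
    have hLi : Subtype.val '' (Subtype.val ⁻¹' L : Set Y) = L := by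
      rw [Subtype.image_preimage_coe]; exact inter_eq_right.2 hLY
    refine ⟨Subtype.val ⁻¹' L, hL.preimage continuous_subtype_val, ?_, ?_⟩
    · refine ⟨?_, ?_⟩
      · obtain ⟨y, hy⟩ := hLc.nonempty
        exact ⟨⟨y, hLY hy⟩, hy⟩
      · rw [← IsInducing.subtypeVal.isPreconnected_image, hLi]
        exact hLc.isPreconnected
    · rw [← hLK, ← hLi, image_image, hLi]
  refine ⟨Y, inferInstance, isCompact_iff_compactSpace.1 hY.isCompact, inferInstance,
    isConnected_iff_connectedSpace.1 hYc, hYc.nonempty.to_subtype, inferInstance, ?_,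
    fun y => y.1.1, continuous_fst.comp continuous_subtype_val, ?_, hW⟩
  · rintro A B hA hAc hB hBc ⟨c, hcA, hcB⟩
    have := hHI (Subtype.val '' A) (by rintro _ ⟨x, -, rfl⟩; exact x.2)
      (Subtype.val '' B) (by rintro _ ⟨x, -, rfl⟩; exact x.2) (himg A hA)
      (hAc.image _ continuous_subtype_val.continuousOn) (himg B hB)
      (hBc.image _ continuous_subtype_val.continuousOn) ⟨c, ⟨c, hcA, rfl⟩, ⟨c, hcB, rfl⟩⟩
    rwa [image_subset_image_iff Subtype.val_injective,
      image_subset_image_iff Subtype.val_injective] at this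
  · intro x
    obtain ⟨L, -, -, hL⟩ := hW univ isClosed_univ isConnected_univ
    obtain ⟨y, -, hy⟩ := hL.symm ▸ mem_univ x
    exact ⟨y, hy⟩
end

section
/- Every continuum is the weakly confluent image of a hereditarily indecomposable continuum of the same weight: for every infinite cardinal κ and every nonempty compact connected Hausdorff space X admitting a base for its topology of cardinality at most κ, there exist a nonempty compact connected Hausdorff hereditarily indecomposable space Y admitting a base of cardinality at most κ and a weakly confluent continuous surjection from Y onto X. -/
open Set Topology Function

universe u

def Crk (v t : ℝ) : Prop :=
  (v ≤ 1 ∧ t = v - 2) ∨ (-1 ≤ v ∧ v ≤ 1 ∧ t = -v) ∨ (-1 ≤ v ∧ t = v + 2)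

theorem Crk.isClosed {E : Type*} [TopologicalSpace E] {v t : E → ℝ}
    (hv : Continuous v) (ht : Continuous t) : IsClosed {e | Crk (v e) (t e)} := by
  unfold Crk
  simp only [ofPred_or, ofPred_and]
  refine IsClosed.union ?_ (IsClosed.union ?_ ?_)
  · exact (isClosed_le hv continuous_const).inter (isClosed_eq ht (by fun_prop))
  · exact (isClosed_le continuous_const hv).inter
      ((isClosed_le hv continuous_const).inter (isClosed_eq ht (by fun_prop)))
  · exact (isClosed_le continuous_const hv).inter (isClosed_eq ht (by fun_prop))

theorem Crk.bound {v t : ℝ} (h : Crk v t) (hv : |v| ≤ 2) : t ∈ Icc (-4 : ℝ) 4 := by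
  rw [abs_le] at hv
  rcases h with h | h | h <;> constructor <;> linarith [hv.1, hv.2, h.1, h.2]

theorem crk_compact {C : Type*} [TopologicalSpace C] [CompactSpace C]
    (f : C → ℝ) (hf : Continuous f) (hb : ∀ z, |f z| ≤ 2) :
    IsCompact {p : C × ℝ | Crk (f p.1) p.2} := by
  refine IsCompact.of_isClosed_subset
    (isCompact_univ.prod (isCompact_Icc (a := (-4 : ℝ)) (b := 4))) ?_ ?_
  · exact Crk.isClosed (by fun_prop) (by fun_prop)
  · rintro ⟨z, t⟩ h
    exact ⟨mem_univ _, Crk.bound h (hb z)⟩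

/-- the degree argument -/
theorem crk_clopen {C : Type*} [TopologicalSpace C] [CompactSpace C] [T2Space C]
    [PreconnectedSpace C] (f : C → ℝ) (hf : Continuous f)
    (z0 : C) (h0 : f z0 < -1) (W W' : Set (C × ℝ)) (hW : IsCompact W) (hW' : IsClosed W')
    (hd : Disjoint W W') (hcov : ∀ z t, Crk (f z) t → (z, t) ∈ W ∨ (z, t) ∈ W')
    (hz0 : (z0, f z0 - 2) ∈ W) (z1 : C) : ∃ t, (z1, t) ∈ W := by
  by_contra hno
  push Not at hno
  obtain ⟨χ, hχ0, hχ1, -⟩ := exists_continuous_zero_one_of_isCompact hW hW' hd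
  have h01 : ∀ z t, Crk (f z) t → χ (z, t) = 0 ∨ χ (z, t) = 1 := by
    intro z t h
    rcases hcov z t h with h | h
    · exact Or.inl (hχ0 h)
    · exact Or.inr (hχ1 h)
  have h1 : ∀ t, Crk (f z1) t → χ (z1, t) = 1 := by
    intro t h
    rcases hcov z1 t h with h | h
    · exact absurd h (hno t)
    · exact hχ1 h
  let d : C → ℝ := fun z => χ (z, min (f z) 1 - 2) - χ (z, - max (-1) (min 1 (f z)))
    + χ (z, max (f z) (-1) + 2)
  have hdc : Continuous d := by fun_prop
  have hlow : ∀ z, f z < -1 → d z = χ (z, f z - 2) := by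
    intro z hz
    have e1 : min (f z) 1 = f z := min_eq_left (by linarith)
    have e2 : max (-1) (min 1 (f z)) = -1 := by
      rw [min_eq_right (by linarith)]; exact max_eq_left hz.le
    have e3 : max (f z) (-1) = -1 := max_eq_right hz.le
    simp only [d, e1, e2, e3]; norm_num
  have hhigh : ∀ z, 1 < f z → d z = χ (z, f z + 2) := by
    intro z hz
    have e1 : min (f z) 1 = 1 := min_eq_right hz.le
    have e2 : max (-1) (min 1 (f z)) = 1 := by
      rw [min_eq_left hz.le]; norm_num
    have e3 : max (f z) (-1) = f z := max_eq_left (by linarith)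
    simp only [d, e1, e2, e3]; norm_num
  have hmid : ∀ z, -1 ≤ f z → f z ≤ 1 →
      d z = χ (z, f z - 2) - χ (z, - f z) + χ (z, f z + 2) := by
    intro z hz hz'
    have e1 : min (f z) 1 = f z := min_eq_left hz'
    have e2 : max (-1) (min 1 (f z)) = f z := by
      rw [min_eq_right hz']; exact max_eq_right hz
    have e3 : max (f z) (-1) = f z := max_eq_left hz
    simp only [d, e1, e2, e3]
  have c0 : ∀ z, f z ≤ 1 → Crk (f z) (f z - 2) := fun z h => Or.inl ⟨h, rfl⟩
  have c1 : ∀ z, -1 ≤ f z → f z ≤ 1 → Crk (f z) (-f z) := fun z h h' => Or.inr (Or.inl ⟨h, h', rfl⟩)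
  have c2 : ∀ z, -1 ≤ f z → Crk (f z) (f z + 2) := fun z h => Or.inr (Or.inr ⟨h, rfl⟩)
  have hd0 : d z0 = 0 := by rw [hlow z0 h0]; exact hχ0 hz0
  have hd1 : d z1 = 1 := by
    rcases lt_or_ge (f z1) (-1) with h | h
    · rw [hlow _ h]; exact h1 _ (c0 _ (by linarith))
    rcases lt_or_ge 1 (f z1) with h' | h'
    · rw [hhigh _ h']; exact h1 _ (c2 _ (by linarith))
    rw [hmid _ h h', h1 _ (c0 _ h'), h1 _ (c1 _ h h'), h1 _ (c2 _ h)]; norm_num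
  have hne : ∀ z, d z ≠ 1 / 2 := by
    intro z
    rcases lt_or_ge (f z) (-1) with h | h
    · rw [hlow _ h]
      rcases h01 _ _ (c0 z (by linarith)) with e | e <;> rw [e] <;> norm_num
    rcases lt_or_ge 1 (f z) with h' | h'
    · rw [hhigh _ h']
      rcases h01 _ _ (c2 z (by linarith)) with e | e <;> rw [e] <;> norm_num
    rw [hmid _ h h']
    rcases h01 _ _ (c0 z h') with e | e <;> rcases h01 _ _ (c1 z h h') with e' | e' <;>
      rcases h01 _ _ (c2 z h) with e'' | e'' <;> rw [e, e', e''] <;> norm_num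
  have := intermediate_value_univ z0 z1 hdc
  rw [hd0, hd1] at this
  obtain ⟨z, hz⟩ := this (show (1 / 2 : ℝ) ∈ Icc 0 1 by constructor <;> norm_num)
  exact hne z hz

theorem crk_component {C : Type*} [TopologicalSpace C] [CompactSpace C] [T2Space C]
    [PreconnectedSpace C] (f : C → ℝ) (hf : Continuous f) (hb : ∀ z, |f z| ≤ 2)
    (z0 : C) (h0 : f z0 < -1) (z1 : C) :
    ∃ t, (z1, t) ∈ connectedComponentIn {p : C × ℝ | Crk (f p.1) p.2} (z0, f z0 - 2) := by
  have hc0 : (z0, f z0 - 2) ∈ {p : C × ℝ | Crk (f p.1) p.2} := Or.inl ⟨by linarith, rfl⟩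
  have hYc := crk_compact f hf hb
  set Y := {p : C × ℝ | Crk (f p.1) p.2} with hY
  have : CompactSpace Y := isCompact_iff_compactSpace.mp hYc
  rw [connectedComponentIn_eq_image hc0, connectedComponent_eq_iInter_isClopen]
  set y0 : Y := ⟨(z0, f z0 - 2), hc0⟩
  let ι := {s : Set Y // IsClopen s ∧ y0 ∈ s}
  have : Nonempty ι := ⟨⟨univ, isClopen_univ, mem_univ _⟩⟩
  have hF : IsClosed {y : Y | y.1.1 = z1} := isClosed_eq (by fun_prop) continuous_const
  have key : (⋂ s : ι, s.1 ∩ {y : Y | y.1.1 = z1}).Nonempty := by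
    refine IsCompact.nonempty_iInter_of_directed_nonempty_isCompact_isClosed _ ?_ ?_ ?_ ?_
    · intro s t
      refine ⟨⟨s.1 ∩ t.1, s.2.1.inter t.2.1, s.2.2, t.2.2⟩, ?_, ?_⟩
      · exact inter_subset_inter_left _ inter_subset_left
      · exact inter_subset_inter_left _ inter_subset_right
    · rintro ⟨s, hs, hys⟩
      obtain ⟨t, y, hy, hyt⟩ := crk_clopen f hf z0 h0 (Subtype.val '' s) (Subtype.val '' sᶜ)
        (hs.1.isCompact.image continuous_subtype_val)
        (hs.compl.1.isCompact.image continuous_subtype_val).isClosed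
        ((disjoint_image_iff Subtype.val_injective).2 disjoint_compl_right)
        (by
          intro z t h
          by_cases hz : (⟨(z, t), h⟩ : Y) ∈ s
          · exact Or.inl ⟨_, hz, rfl⟩
          · exact Or.inr ⟨_, hz, rfl⟩)
        ⟨y0, hys, rfl⟩ z1
      exact ⟨y, hy, by simp [hyt]⟩
    · intro s; exact (s.2.1.1.inter hF).isCompact
    · intro s; exact s.2.1.1.inter hF
  obtain ⟨y, hy⟩ := key
  rw [mem_iInter] at hy
  have h1 : y.1.1 = z1 := (hy (Classical.arbitrary ι)).2
  refine ⟨y.1.2, y, mem_iInter.2 fun s => (hy s).1, ?_⟩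
  rw [← h1]

theorem graph_lift {C : Type*} [TopologicalSpace C] [T2Space C] [CompactSpace C]
    (s : C → ℝ) (hs : Continuous s)
    (K : Set C) (hK : IsClosed K) (hKc : IsConnected K) :
    IsCompact ((fun z => (z, s z)) '' K) ∧ IsConnected ((fun z => (z, s z)) '' K) ∧
    Prod.fst '' ((fun z => (z, s z)) '' K) = K := by
  refine ⟨hK.isCompact.image (by fun_prop), hKc.image _ (by fun_prop), ?_⟩
  rw [image_image]; simp

/-- One crookedness step. -/
theorem crk_step {C : Type*} [TopologicalSpace C] [CompactSpace C] [T2Space C]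
    [ConnectedSpace C] (f : C → ℝ) (hf : Continuous f) (hb : ∀ z, |f z| ≤ 2) :
    ∃ Q : Set (C × ℝ), IsCompact Q ∧ IsConnected Q ∧ (∀ p ∈ Q, Crk (f p.1) p.2) ∧
      ∀ K : Set C, IsClosed K → IsConnected K →
        ∃ K' ⊆ Q, IsCompact K' ∧ IsConnected K' ∧ Prod.fst '' K' = K := by
  by_cases h0 : ∃ z0, f z0 < -1
  swap
  · push Not at h0
    obtain ⟨a, b, -⟩ := graph_lift (fun z => f z + 2) (by fun_prop) univ isClosed_univ isConnected_univ
    refine ⟨_, a, b, ?_, ?_⟩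
    · rintro _ ⟨z, -, rfl⟩
      exact Or.inr (Or.inr ⟨h0 z, rfl⟩)
    · intro K hK hKc
      exact ⟨_, image_mono (subset_univ K), graph_lift (fun z => f z + 2) (by fun_prop) K hK hKc⟩
  obtain ⟨z0, h0⟩ := h0
  have hsurj := crk_component f hf hb z0 h0
  have hYc := crk_compact f hf hb
  have hc0 : (z0, f z0 - 2) ∈ {p : C × ℝ | Crk (f p.1) p.2} := Or.inl ⟨by linarith, rfl⟩
  set Y := {p : C × ℝ | Crk (f p.1) p.2} with hY
  set Q := connectedComponentIn Y (z0, f z0 - 2) with hQ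
  have hQc : IsConnected Q := isConnected_connectedComponentIn_iff.2 hc0
  have hQs : Q ⊆ Y := connectedComponentIn_subset _ _
  have hmax : ∀ P : Set (C × ℝ), IsPreconnected P → P ⊆ Y → ∀ p ∈ P, p ∈ Q → P ⊆ Q := by
    intro P hP hPY p hpP hpQ
    rw [hQ, connectedComponentIn_eq hpQ]
    exact hP.subset_connectedComponentIn hpP hPY
  have hQcl : IsClosed Q := by
    have hcl : closure Q ⊆ Y := closure_minimal hQs hYc.isClosed
    obtain ⟨q, hq⟩ := hQc.nonempty
    exact isClosed_of_closure_subset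
      (hmax _ hQc.isPreconnected.closure hcl q (subset_closure hq) hq)
  have hQk : IsCompact Q := hYc.of_isClosed_subset hQcl hQs
  refine ⟨Q, hQk, hQc, hQs, ?_⟩
  intro K hK hKc
  have hgr : ∀ s : C → ℝ, Continuous s → (∀ z ∈ K, Crk (f z) (s z)) →
      (∃ z ∈ K, (z, s z) ∈ Q) →
      ∃ K' ⊆ Q, IsCompact K' ∧ IsConnected K' ∧ Prod.fst '' K' = K := by
    rintro s hs hsY ⟨z, hz, hzQ⟩
    obtain ⟨a, b, c⟩ := graph_lift s hs K hK hKc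
    refine ⟨_, hmax _ b.isPreconnected ?_ _ ⟨z, hz, rfl⟩ hzQ, a, b, c⟩
    rintro _ ⟨w, hw, rfl⟩
    exact hsY w hw
  by_cases h1 : ∃ z ∈ K, f z < -1
  · obtain ⟨z1, hz1, h1⟩ := h1
    have hQ1 : (z1, f z1 - 2) ∈ Q := by
      obtain ⟨t, ht⟩ := hsurj z1
      rcases hQs ht with h | h | h
      · simp only at h; rw [← h.2]; exact ht
      · simp only at h; linarith [h.1]
      · simp only at h; linarith [h.1]
    have : CompactSpace K := isCompact_iff_compactSpace.mp hK.isCompact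
    have : PreconnectedSpace K := isPreconnected_iff_preconnectedSpace.1 hKc.isPreconnected
    have hs1 := crk_component (fun z : K => f z) (by fun_prop) (fun z => hb z) ⟨z1, hz1⟩ h1
    set R := connectedComponentIn {p : K × ℝ | Crk (f p.1) p.2} (⟨z1, hz1⟩, f z1 - 2) with hR
    have hRc : IsConnected R := isConnected_connectedComponentIn_iff.2 (Or.inl ⟨by simp; linarith, rfl⟩)
    have hRs : R ⊆ {p : K × ℝ | Crk (f p.1) p.2} := connectedComponentIn_subset _ _
    let φ : K × ℝ → C × ℝ := fun p => (p.1, p.2)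
    have hφ : Continuous φ := by fun_prop
    have hfst : Prod.fst '' (φ '' R) = K := by
      ext z
      constructor
      · rintro ⟨_, ⟨p, -, rfl⟩, rfl⟩; exact p.1.2
      · intro hz
        obtain ⟨t, ht⟩ := hs1 ⟨z, hz⟩
        exact ⟨_, ⟨_, ht, rfl⟩, rfl⟩
    have hsub : φ '' R ⊆ Q := by
      refine hmax _ (hRc.image φ hφ.continuousOn).isPreconnected ?_ _
        ⟨_, mem_connectedComponentIn (Or.inl ⟨by simp; linarith, rfl⟩), rfl⟩ hQ1
      rintro _ ⟨p, hp, rfl⟩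
      exact hRs hp
    refine ⟨closure (φ '' R), closure_minimal hsub hQcl, ?_, (hRc.image φ hφ.continuousOn).closure, ?_⟩
    · exact hQk.of_isClosed_subset isClosed_closure (closure_minimal hsub hQcl)
    · apply Subset.antisymm
      · rintro _ ⟨p, hp, rfl⟩
        have : φ '' R ⊆ Prod.fst ⁻¹' K := by
          rw [← image_subset_iff, hfst]
        exact closure_minimal this (hK.preimage continuous_fst) hp
      · exact hfst.symm.subset.trans (image_mono subset_closure)
  push Not at h1
  by_cases h2 : ∃ z ∈ K, 1 < f z
  · obtain ⟨z1, hz1, h2⟩ := h2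
    refine hgr (fun z => f z + 2) (by fun_prop) (fun z hz => Or.inr (Or.inr ⟨h1 z hz, rfl⟩)) ⟨z1, hz1, ?_⟩
    obtain ⟨t, ht⟩ := hsurj z1
    rcases hQs ht with h | h | h
    · simp only at h; linarith [h.1]
    · simp only at h; linarith [h.2.1]
    · simp only at h ⊢; rw [← h.2]; exact ht
  push Not at h2
  obtain ⟨z1, hz1⟩ := hKc.nonempty
  obtain ⟨t, ht⟩ := hsurj z1
  rcases hQs ht with h | h | h
  · refine hgr (fun z => f z - 2) (by fun_prop) (fun z hz => Or.inl ⟨h2 z hz, rfl⟩) ⟨z1, hz1, ?_⟩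
    simp only at h ⊢; rw [← h.2]; exact ht
  · refine hgr (fun z => - f z) (by fun_prop) (fun z hz => Or.inr (Or.inl ⟨h1 z hz, h2 z hz, rfl⟩)) ⟨z1, hz1, ?_⟩
    simp only at h ⊢; rw [← h.2.2]; exact ht
  · refine hgr (fun z => f z + 2) (by fun_prop) (fun z hz => Or.inr (Or.inr ⟨h1 z hz, rfl⟩)) ⟨z1, hz1, ?_⟩
    simp only at h ⊢; rw [← h.2]; exact ht

/-! ### Ultrafilter limits of continua -/

def ulim {ι E : Type*} [TopologicalSpace E] (U : Ultrafilter ι) (C : ι → Set E) : Set E :=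
  {z | ∀ N ∈ 𝓝 z, ∀ᶠ i in (U : Filter ι), (N ∩ C i).Nonempty}

theorem ulim_mono {ι E : Type*} [TopologicalSpace E] (U : Ultrafilter ι) {C D : ι → Set E}
    (h : ∀ i, C i ⊆ D i) : ulim U C ⊆ ulim U D := by
  intro z hz N hN
  filter_upwards [hz N hN] with i hi
  exact hi.mono (inter_subset_inter_right _ (h i))

theorem ulim_isClosed {ι E : Type*} [TopologicalSpace E] (U : Ultrafilter ι) (C : ι → Set E) :
    IsClosed (ulim U C) := by
  refine isClosed_of_closure_subset ?_
  intro z hz N hN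
  obtain ⟨O, hON, hO, hzO⟩ := mem_nhds_iff.1 hN
  obtain ⟨w, hwO, hw⟩ := mem_closure_iff.1 hz O hO hzO
  filter_upwards [hw O (hO.mem_nhds hwO)] with i hi
  exact hi.mono (inter_subset_inter_left _ hON)

theorem ulim_subset {ι E : Type*} [TopologicalSpace E] (U : Ultrafilter ι) {C : ι → Set E}
    {F : Set E} (hF : IsClosed F) (h : ∀ᶠ i in (U : Filter ι), C i ⊆ F) : ulim U C ⊆ F := by
  intro z hz
  by_contra hzF
  have h1 := hz Fᶜ (hF.isOpen_compl.mem_nhds hzF)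
  obtain ⟨i, hi, w, hw, hw'⟩ := (h.and h1).exists
  exact hw (hi hw')

theorem ulim_point {ι E : Type*} [TopologicalSpace E] (U : Ultrafilter ι) {C : ι → Set E}
    {M : Set E} (hM : IsCompact M) (z : ι → E) (hzM : ∀ᶠ i in (U : Filter ι), z i ∈ M)
    (hz : ∀ᶠ i in (U : Filter ι), z i ∈ C i) :
    ∃ w ∈ ulim U C, Filter.Tendsto z U (𝓝 w) := by
  obtain ⟨w, -, hw⟩ := hM.ultrafilter_le_nhds (U.map z) (by rw [Filter.le_principal_iff]; exact hzM)
  have hw' : Filter.Tendsto z U (𝓝 w) := hw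
  refine ⟨w, ?_, hw'⟩
  intro N hN
  filter_upwards [hw' hN, hz] with i h1 h2
  exact ⟨z i, h1, h2⟩

theorem ulim_isConnected {ι E : Type*} [TopologicalSpace E] [T2Space E] (U : Ultrafilter ι)
    {C : ι → Set E} {M : Set E} (hM : IsCompact M) (hCM : ∀ i, C i ⊆ M)
    (hC : ∀ i, IsConnected (C i)) : IsConnected (ulim U C) := by
  have hLM : ulim U C ⊆ M := ulim_subset U hM.isClosed (Filter.Eventually.of_forall hCM)
  have hLk : IsCompact (ulim U C) := hM.of_isClosed_subset (ulim_isClosed U C) hLM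
  constructor
  · choose z hz using fun i => (hC i).nonempty
    obtain ⟨w, hw, -⟩ := ulim_point U hM z (Filter.Eventually.of_forall fun i => hCM i (hz i))
      (Filter.Eventually.of_forall hz)
    exact ⟨w, hw⟩
  · rw [isPreconnected_closed_iff]
    rintro A B hA hB hAB ⟨a, haL, haA⟩ ⟨b, hbL, hbB⟩
    by_contra hne
    rw [not_nonempty_iff_eq_empty] at hne
    have hdis : Disjoint (ulim U C ∩ A) (ulim U C ∩ B) := by
      rw [disjoint_iff_inter_eq_empty, ← hne]
      ext x; simp only [mem_inter_iff]; tauto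
    obtain ⟨O, O', hO, hO', hsO, hsO', hd⟩ :=
      SeparatedNhds.of_isCompact_isCompact (hLk.inter_right hA) (hLk.inter_right hB) hdis
    have hsub : ∀ᶠ i in (U : Filter ι), C i ⊆ O ∪ O' := by
      by_contra hns
      rw [← Ultrafilter.eventually_not] at hns
      have hns' : ∀ᶠ i in (U : Filter ι), ∃ z ∈ C i, z ∉ O ∪ O' := by
        filter_upwards [hns] with i hi
        exact not_subset.1 hi
      have : ∀ i, ∃ z ∈ C i, (∃ z ∈ C i, z ∉ O ∪ O') → z ∉ O ∪ O' := by
        intro i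
        by_cases h : ∃ z ∈ C i, z ∉ O ∪ O'
        · obtain ⟨z, hz, hz'⟩ := h
          exact ⟨z, hz, fun _ => hz'⟩
        · obtain ⟨z, hz⟩ := (hC i).nonempty
          exact ⟨z, hz, fun h' => absurd h' h⟩
      choose z hz hz' using this
      obtain ⟨w, hw, hlim⟩ := ulim_point U hM z (Filter.Eventually.of_forall fun i => hCM i (hz i))
        (Filter.Eventually.of_forall hz)
      have hwO : w ∈ (O ∪ O')ᶜ := (hO.union hO').isClosed_compl.mem_of_tendsto hlim
        (by filter_upwards [hns'] with i hi using hz' i hi)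
      rcases hAB hw with h | h
      · exact hwO (Or.inl (hsO ⟨hw, h⟩))
      · exact hwO (Or.inr (hsO' ⟨hw, h⟩))
    have h1 := haL O (hO.mem_nhds (hsO ⟨haL, haA⟩))
    have h2 := hbL O' (hO'.mem_nhds (hsO' ⟨hbL, hbB⟩))
    obtain ⟨i, hi, h1, h2⟩ := (hsub.and (h1.and h2)).exists
    obtain ⟨x, -, hx, hx'⟩ := (hC i).isPreconnected O O' hO hO' hi
      (by rwa [inter_comm]) (by rwa [inter_comm])
    exact disjoint_left.1 hd hx hx'

/-! ### Terms -/

inductive Tm (A : Type u) : Type u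
  | base (a : A) : Tm A
  | cst (p : ℚ) : Tm A
  | coord (s : Tm A) : Tm A
  | aff (p q : ℚ) (s : Tm A) : Tm A
  | sup (s t : Tm A) : Tm A
  | inf (s t : Tm A) : Tm A

namespace Tm

abbrev Lab (A : Type u) : Type u := (A ⊕ ℚ) ⊕ (ℚ × ℚ × ℕ)

def Ar {A : Type u} : Lab A → Type
  | Sum.inl _ => Empty
  | Sum.inr _ => Bool

instance {A : Type u} (l : Lab A) : Finite (Ar l) := by
  cases l <;> simp only [Ar] <;> infer_instance

def enc {A : Type u} : Tm A → WType (Ar (A := A))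
  | base a => WType.mk (Sum.inl (Sum.inl a)) Empty.elim
  | cst p => WType.mk (Sum.inl (Sum.inr p)) Empty.elim
  | coord s => WType.mk (Sum.inr (0, 0, 0)) (fun _ : Bool => enc s)
  | aff p q s => WType.mk (Sum.inr (p, q, 1)) (fun _ : Bool => enc s)
  | sup s t => WType.mk (Sum.inr (0, 0, 2)) (fun b : Bool => cond b (enc s) (enc t))
  | inf s t => WType.mk (Sum.inr (0, 0, 3)) (fun b : Bool => cond b (enc s) (enc t))

theorem enc_injective {A : Type u} : Injective (enc (A := A)) := by
  intro x
  induction x with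
  | base a =>
    intro y h
    cases y <;> obtain ⟨h1, h2⟩ := WType.mk.inj h <;> simp at h1
    rw [h1]
  | cst a =>
    intro y h
    cases y <;> obtain ⟨h1, h2⟩ := WType.mk.inj h <;> simp at h1
    rw [h1]
  | coord s ih =>
    intro y h
    cases y <;> obtain ⟨h1, h2⟩ := WType.mk.inj h <;> simp at h1
    rw [ih (congrFun (eq_of_heq h2) true)]
  | aff p q s ih =>
    intro y h
    cases y <;> obtain ⟨h1, h2⟩ := WType.mk.inj h <;> simp at h1
    obtain ⟨rfl, rfl⟩ := h1
    rw [ih (congrFun (eq_of_heq h2) true)]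
  | sup s t ih ih' =>
    intro y h
    cases y <;> obtain ⟨h1, h2⟩ := WType.mk.inj h <;> simp at h1
    rw [ih (congrFun (eq_of_heq h2) true), ih' (congrFun (eq_of_heq h2) false)]
  | inf s t ih ih' =>
    intro y h
    cases y <;> obtain ⟨h1, h2⟩ := WType.mk.inj h <;> simp at h1
    rw [ih (congrFun (eq_of_heq h2) true), ih' (congrFun (eq_of_heq h2) false)]

theorem card_le {A : Type u} {κ : Cardinal.{u}} (hκ : Cardinal.aleph0 ≤ κ)
    (hA : Cardinal.mk A ≤ κ) : Cardinal.mk (Tm A) ≤ κ := by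
  refine (Cardinal.mk_le_of_injective enc_injective).trans ?_
  refine (WType.cardinalMk_le_max_aleph0_of_finite' (β := Ar (A := A))).trans (max_le ?_ hκ)
  rw [Cardinal.lift_uzero, Cardinal.mk_sum, Cardinal.mk_sum]
  have h1 : Cardinal.mk ℚ ≤ Cardinal.aleph0 := Cardinal.mk_le_aleph0
  have h2 : Cardinal.mk (ℚ × ℚ × ℕ) ≤ Cardinal.aleph0 := Cardinal.mk_le_aleph0
  have h1' := (Cardinal.lift_le.{u}.2 h1).trans (by simpa using hκ)
  have h2' := (Cardinal.lift_le.{u}.2 h2).trans (by simpa using hκ)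
  simp only [Cardinal.lift_uzero] at *
  refine Cardinal.add_le_of_le hκ (Cardinal.add_le_of_le hκ ?_ ?_) ?_ <;> assumption

def sz {A : Type u} : Tm A → ℕ
  | base _ => 0
  | cst _ => 0
  | coord s => sz s + 1
  | aff _ _ s => sz s + 1
  | sup s t => sz s + sz t + 1
  | inf s t => sz s + sz t + 1

noncomputable def ev {A X : Type u} (h : A → X → ℝ) : Tm A → X × (Tm A → ℝ) → ℝ
  | base a, z => h a z.1
  | cst p, _ => (p : ℝ)
  | coord s, z => z.2 s
  | aff p q s, z => (q : ℝ) * (ev h s z - p)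
  | sup s t, z => max (ev h s z) (ev h t z)
  | inf s t, z => min (ev h s z) (ev h t z)

theorem ev_continuous {A X : Type u} [TopologicalSpace X] (h : A → X → ℝ)
    (hh : ∀ a, Continuous (h a)) (s : Tm A) : Continuous (ev h s) := by
  induction s with
  | base a => exact (hh a).comp continuous_fst
  | cst p => exact continuous_const
  | coord s => exact (continuous_apply s).comp continuous_snd
  | aff p q s ih => simp only [ev]; fun_prop
  | sup s t ih ih' => simp only [ev]; fun_prop
  | inf s t ih ih' => simp only [ev]; fun_prop

open Classical in
theorem ev_update {A X : Type u} (h : A → X → ℝ) (a : Tm A) (r : ℝ) (x : X) (t : Tm A → ℝ)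
    (s : Tm A) (hs : sz s ≤ sz a) : ev h s (x, update t a r) = ev h s (x, t) := by
  induction s with
  | base a => rfl
  | cst p => rfl
  | coord s =>
    simp only [ev]
    apply update_of_ne
    rintro rfl
    simp [sz] at hs
  | aff p q s ih => simp only [ev]; rw [ih (by simp only [sz] at hs; omega)]
  | sup s t ih ih' =>
    simp only [ev]; rw [ih (by simp only [sz] at hs; omega), ih' (by simp only [sz] at hs; omega)]
  | inf s t ih ih' =>
    simp only [ev]; rw [ih (by simp only [sz] at hs; omega), ih' (by simp only [sz] at hs; omega)]

end Tm

noncomputable def clp (v : ℝ) : ℝ := max (-2) (min 2 v)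

theorem clp_continuous : Continuous clp := by unfold clp; fun_prop

theorem clp_abs (v : ℝ) : |clp v| ≤ 2 := by
  rw [abs_le]; unfold clp
  exact ⟨le_max_left _ _, max_le (by norm_num) (min_le_left _ _)⟩

open Classical in
theorem finite_stage {A X : Type u} [TopologicalSpace X] [CompactSpace X] [T2Space X]
    [ConnectedSpace X] (h : A → X → ℝ) (hh : ∀ a, Continuous (h a)) (S : Finset (Tm A)) :
    ∃ C : Set (X × (Tm A → ℝ)), IsCompact C ∧ IsConnected C ∧
      (∀ p ∈ C, ∀ s, p.2 s ∈ Icc (-4 : ℝ) 4) ∧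
      (∀ p ∈ C, ∀ s ∈ S, Crk (clp (Tm.ev h s p)) (p.2 s)) ∧
      ∀ K : Set X, IsClosed K → IsConnected K →
        ∃ K' ⊆ C, IsCompact K' ∧ IsConnected K' ∧ Prod.fst '' K' = K := by
  induction S using Finset.induction_on_max_value Tm.sz with
  | empty =>
    let φ : X → X × (Tm A → ℝ) := fun x => (x, 0)
    have hφ : Continuous φ := by fun_prop
    refine ⟨φ '' univ, isCompact_univ.image hφ, isConnected_univ.image _ hφ.continuousOn,
      ?_, by simp, ?_⟩
    · rintro _ ⟨x, -, rfl⟩ s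
      constructor <;> simp [φ]
    · intro K hK hKc
      refine ⟨φ '' K, image_mono (subset_univ _), hK.isCompact.image hφ,
        hKc.image _ hφ.continuousOn, ?_⟩
      rw [image_image]; simp [φ]
  | insert a S haS hmax ih =>
    obtain ⟨C, hCk, hCc, hCM, hCe, hCK⟩ := ih
    have : CompactSpace C := isCompact_iff_compactSpace.mp hCk
    have : ConnectedSpace C := isConnected_iff_connectedSpace.1 hCc
    have hcev : Continuous (fun c : C => clp (Tm.ev h a c.1)) :=
      clp_continuous.comp ((Tm.ev_continuous h hh a).comp continuous_subtype_val)
    obtain ⟨Q, hQk, hQc, hQe, hQK⟩ := crk_step (fun c : C => clp (Tm.ev h a c.1)) hcev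
      (fun c => clp_abs _)
    let φ : C × ℝ → X × (Tm A → ℝ) := fun p => (p.1.1.1, update p.1.1.2 a p.2)
    have hφ : Continuous φ := by
      refine Continuous.prodMk (by fun_prop) ?_
      exact Continuous.update (by fun_prop) a continuous_snd
    refine ⟨φ '' Q, hQk.image hφ, hQc.image _ hφ.continuousOn, ?_, ?_, ?_⟩
    · rintro _ ⟨p, hp, rfl⟩ s
      by_cases hs : s = a
      · subst hs
        simp only [φ, update_self]
        exact (hQe p hp).bound (clp_abs _)
      · simp only [φ, update_of_ne hs]
        exact hCM _ p.1.2 s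
    · rintro _ ⟨p, hp, rfl⟩ s hs
      by_cases hsa : s = a
      · subst hsa
        simp only [φ, update_self]
        rw [Tm.ev_update _ _ _ _ _ _ le_rfl]
        exact hQe p hp
      · have hsS : s ∈ S := (Finset.mem_insert.1 hs).resolve_left hsa
        simp only [φ, update_of_ne hsa]
        rw [Tm.ev_update _ _ _ _ _ _ (hmax s hsS)]
        exact hCe _ p.1.2 s hsS
    · intro K hK hKc
      obtain ⟨K1, hK1C, hK1k, hK1c, rfl⟩ := hCK K hK hKc
      have him : Subtype.val '' (Subtype.val ⁻¹' K1 : Set C) = K1 := by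
        rw [Subtype.image_preimage_coe, inter_eq_right.2 hK1C]
      have hconn : IsConnected (Subtype.val ⁻¹' K1 : Set C) := by
        constructor
        · obtain ⟨k, hk⟩ := hK1c.nonempty
          exact ⟨⟨k, hK1C hk⟩, hk⟩
        · rw [← Topology.IsInducing.subtypeVal.isPreconnected_image, him]
          exact hK1c.isPreconnected
      obtain ⟨K2, hK2Q, hK2k, hK2c, hK2⟩ := hQK _ (hK1k.isClosed.preimage continuous_subtype_val) hconn
      refine ⟨φ '' K2, image_mono hK2Q, hK2k.image hφ, hK2c.image _ hφ.continuousOn, ?_⟩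
      rw [← him, ← hK2]
      simp only [image_image, φ]

theorem total_stage {A X : Type u} [TopologicalSpace X] [CompactSpace X] [T2Space X]
    [ConnectedSpace X] (h : A → X → ℝ) (hh : ∀ a, Continuous (h a)) :
    ∃ C : Set (X × (Tm A → ℝ)), IsCompact C ∧ IsConnected C ∧
      (∀ p ∈ C, ∀ s, Crk (clp (Tm.ev h s p)) (p.2 s)) ∧
      ∀ K : Set X, IsClosed K → IsConnected K →
        ∃ K' ⊆ C, IsClosed K' ∧ IsConnected K' ∧ Prod.fst '' K' = K := by
  choose C hCk hCc hCM hCe hCK using finite_stage h hh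
  let U : Ultrafilter (Finset (Tm A)) := Ultrafilter.of Filter.atTop
  have hU : (U : Filter (Finset (Tm A))) ≤ Filter.atTop := Ultrafilter.of_le _
  let M : Set (X × (Tm A → ℝ)) := univ ×ˢ (univ.pi fun _ => Icc (-4 : ℝ) 4)
  have hM : IsCompact M := isCompact_univ.prod (isCompact_univ_pi fun _ => isCompact_Icc)
  have hCM' : ∀ S, C S ⊆ M := fun S p hp => ⟨mem_univ _, fun s _ => hCM S p hp s⟩
  refine ⟨ulim U C, ?_, ulim_isConnected U hM hCM' hCc, ?_, ?_⟩
  · exact hM.of_isClosed_subset (ulim_isClosed U C)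
      (ulim_subset U hM.isClosed (Filter.Eventually.of_forall hCM'))
  · intro p hp s
    have hF : IsClosed {p : X × (Tm A → ℝ) | Crk (clp (Tm.ev h s p)) (p.2 s)} :=
      Crk.isClosed (clp_continuous.comp (Tm.ev_continuous h hh s)) (by fun_prop)
    refine ulim_subset U hF ?_ hp
    filter_upwards [hU (Filter.eventually_ge_atTop {s})] with S hS q hq
    exact hCe S q hq s (hS (Finset.mem_singleton_self s))
  · intro K hK hKc
    choose D hDC hDk hDc hD using fun S => hCK S K hK hKc
    refine ⟨ulim U D, ulim_mono U hDC, ulim_isClosed U D,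
      ulim_isConnected U hM (fun S => (hDC S).trans (hCM' S)) hDc, ?_⟩
    apply Subset.antisymm
    · rw [image_subset_iff]
      refine ulim_subset U (hK.preimage continuous_fst) (Filter.Eventually.of_forall fun S => ?_)
      rw [← image_subset_iff, hD]
    · intro x hx
      have : ∀ S, ∃ z ∈ D S, z.1 = x := by
        intro S
        rw [← hD S] at hx
        exact hx
      choose z hz hzx using this
      obtain ⟨w, hw, hlim⟩ := ulim_point U hM z
        (Filter.Eventually.of_forall fun S => hCM' S (hDC S (hz S))) (Filter.Eventually.of_forall hz)
      refine ⟨w, hw, ?_⟩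
      have h1 : Filter.Tendsto (fun S => (z S).1) U (𝓝 w.1) := (continuous_fst.tendsto w).comp hlim
      simp only [hzx] at h1
      exact tendsto_nhds_unique h1 tendsto_const_nhds

theorem stretch {r s : ℝ} (h : r ≠ s) : ∃ p q : ℚ, (q : ℝ) * (r - p) < -1 ∧ 1 < (q : ℝ) * (s - p) := by
  have key : ∀ r s : ℝ, r < s → ∃ p q : ℚ, (q : ℝ) * (r - p) < -1 ∧ 1 < (q : ℝ) * (s - p) := by
    intro r s h
    obtain ⟨p, hp, hp'⟩ := exists_rat_btwn h
    obtain ⟨q, hq⟩ := exists_rat_gt (max (1 / (p - r)) (1 / (s - p)))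
    have h1 := (div_lt_iff₀ (by linarith)).1 ((le_max_left _ _).trans_lt hq)
    have h2 := (div_lt_iff₀ (by linarith)).1 ((le_max_right _ _).trans_lt hq)
    exact ⟨p, q, by linarith, by linarith⟩
  rcases lt_or_gt_of_ne h with h | h
  · exact key r s h
  · obtain ⟨p, q, h1, h2⟩ := key s r h
    exact ⟨p, -q, by push_cast; linarith, by push_cast; linarith⟩

theorem sep_points {A X : Type u}
    (h : A → X → ℝ) (hsep : ∀ x y, x ≠ y → ∃ a, h a x ≠ h a y) (y z : X × (Tm A → ℝ)) (hyz : y ≠ z) :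
    ∃ s, Tm.ev h s y < -1 ∧ 1 < Tm.ev h s z := by
  have : ∃ s, Tm.ev h s y ≠ Tm.ev h s z := by
    by_cases h1 : y.1 = z.1
    · have h2 : y.2 ≠ z.2 := fun h2 => hyz (Prod.ext h1 h2)
      obtain ⟨s, hs⟩ := Function.ne_iff.1 h2
      exact ⟨Tm.coord s, hs⟩
    · obtain ⟨a, ha⟩ := hsep _ _ h1
      exact ⟨Tm.base a, ha⟩
  obtain ⟨s, hs⟩ := this
  obtain ⟨p, q, h1, h2⟩ := stretch hs
  exact ⟨Tm.aff p q s, h1, h2⟩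

theorem sep_compact {A X : Type u} [TopologicalSpace X] [T2Space X]
    (h : A → X → ℝ) (hh : ∀ a, Continuous (h a)) (hsep : ∀ x y, x ≠ y → ∃ a, h a x ≠ h a y)
    (C : Set (X × (Tm A → ℝ))) (y : C) (L : Set C) (hL : IsCompact L) (hy : y ∉ L) :
    ∃ s, Tm.ev h s y.1 < -1 ∧ ∀ z ∈ L, 1 < Tm.ev h s z.1 := by
  refine hL.induction_on (p := fun L => ∃ s, Tm.ev h s y.1 < -1 ∧ ∀ z ∈ L, 1 < Tm.ev h s z.1)
    ?_ ?_ ?_ ?_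
  · exact ⟨Tm.cst (-2), by simp [Tm.ev], by simp⟩
  · rintro S T hST ⟨s, h1, h2⟩
    exact ⟨s, h1, fun z hz => h2 z (hST hz)⟩
  · rintro S T ⟨s, h1, h2⟩ ⟨t, h3, h4⟩
    refine ⟨Tm.sup s t, max_lt h1 h3, ?_⟩
    rintro z (hz | hz)
    · exact lt_max_of_lt_left (h2 z hz)
    · exact lt_max_of_lt_right (h4 z hz)
  · intro z hz
    have hne : y.1 ≠ z.1 := fun e => hy (by rwa [Subtype.ext e])
    obtain ⟨s, h1, h2⟩ := sep_points h hsep _ _ hne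
    refine ⟨{w : C | 1 < Tm.ev h s w.1}, mem_nhdsWithin_of_mem_nhds ?_, s, h1, fun w hw => hw⟩
    exact (isOpen_lt continuous_const
      ((Tm.ev_continuous h hh s).comp continuous_subtype_val)).mem_nhds h2

theorem total_HI {A X : Type u} [TopologicalSpace X] [T2Space X]
    (h : A → X → ℝ) (hh : ∀ a, Continuous (h a)) (hsep : ∀ x y, x ≠ y → ∃ a, h a x ≠ h a y)
    (C : Set (X × (Tm A → ℝ))) (hC : IsCompact C)
    (hCe : ∀ p ∈ C, ∀ s, Crk (clp (Tm.ev h s p)) (p.2 s)) : HereditarilyIndecomposable C := by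
  have : CompactSpace C := isCompact_iff_compactSpace.mp hC
  rintro P R hP hPc hR hRc ⟨c, hcP, hcR⟩
  by_contra hcon
  push Not at hcon
  obtain ⟨⟨a, haP, haR⟩, ⟨b, hbR, hbP⟩⟩ := hcon.imp not_subset.1 not_subset.1
  obtain ⟨u, hu1, hu2⟩ := sep_compact h hh hsep C a R hR.isCompact haR
  obtain ⟨v, hv1, hv2⟩ := sep_compact h hh hsep C b P hP.isCompact hbP
  let s : Tm A := Tm.sup (Tm.aff 0 (-1) v) (Tm.inf u (Tm.cst 0))
  have hs : ∀ p, Tm.ev h s p = max (-Tm.ev h v p) (min (Tm.ev h u p) 0) := by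
    intro p; simp [s, Tm.ev]
  let t : C → ℝ := fun p => p.1.2 s
  have ht : Continuous t := by fun_prop
  let G : C → ℝ := fun p => clp (Tm.ev h s p.1)
  have hG : ∀ p, Crk (G p) (t p) := fun p => hCe p.1 p.2 s
  have hGP : ∀ p ∈ P, G p ≤ 0 := by
    intro p hp
    have := hv2 p hp
    simp only [G, clp, hs]
    refine max_le (by norm_num) ((min_le_right _ _).trans (max_le (by linarith) (min_le_right _ _)))
  have hGR : ∀ p ∈ R, 0 ≤ G p := by
    intro p hp
    have := hu2 p hp
    simp only [G, clp, hs]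
    refine le_max_of_le_right (le_min (by norm_num) (le_max_of_le_right (le_min (by linarith) le_rfl)))
  have hGa : G a < -1 := by
    have := hv2 a haP
    simp only [G, clp, hs]
    refine max_lt (by norm_num) ((min_le_right _ _).trans_lt
      (max_lt (by linarith) ((min_le_left _ _).trans_lt hu1)))
  have hGb : 1 < G b := by
    simp only [G, clp, hs]
    refine lt_max_of_lt_right (lt_min (by norm_num) (lt_max_of_lt_left (by linarith)))
  have hta : t a < -1 := by
    rcases hG a with h | h | h
    · linarith [h.2]
    · linarith [h.1]
    · linarith [h.1]
  have htb : 1 < t b := by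
    rcases hG b with h | h | h
    · linarith [h.1]
    · linarith [h.2.1]
    · linarith [h.2]
  have hcl : t c < -1 := by
    by_contra hge
    push Not at hge
    obtain ⟨p, hp, hpt⟩ := hPc.isPreconnected.intermediate_value haP hcP ht.continuousOn ⟨hta.le, hge⟩
    have h0 := hGP p hp
    rcases hG p with h | h | h <;> rw [hpt] at h
    · linarith [h.2]
    · linarith [h.2.2]
    · linarith [h.1, h.2]
  have hcr : 1 < t c := by
    by_contra hge
    push Not at hge
    obtain ⟨p, hp, hpt⟩ := hRc.isPreconnected.intermediate_value hcR hbR ht.continuousOn ⟨hge, htb.le⟩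
    have h0 := hGR p hp
    rcases hG p with h | h | h <;> rw [hpt] at h
    · linarith [h.1, h.2]
    · linarith [h.2.2]
    · linarith [h.2]
  linarith

theorem total_basis {A X : Type u} [TopologicalSpace X] [T2Space X]
    (h : A → X → ℝ) (hh : ∀ a, Continuous (h a)) (hsep : ∀ x y, x ≠ y → ∃ a, h a x ≠ h a y)
    (C : Set (X × (Tm A → ℝ))) (hC : IsCompact C) {κ : Cardinal.{u}} (hκ : Cardinal.aleph0 ≤ κ)
    (hA : Cardinal.mk A ≤ κ) :
    ∃ B : Set (Set C), TopologicalSpace.IsTopologicalBasis B ∧ Cardinal.mk B ≤ κ := by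
  have : CompactSpace C := isCompact_iff_compactSpace.mp hC
  refine ⟨range fun s : Tm A => {p : C | Tm.ev h s p.1 < 0}, ?_,
    Cardinal.mk_range_le.trans (Tm.card_le hκ hA)⟩
  refine TopologicalSpace.isTopologicalBasis_of_isOpen_of_nhds ?_ ?_
  · rintro _ ⟨s, rfl⟩
    exact isOpen_lt ((Tm.ev_continuous h hh s).comp continuous_subtype_val) continuous_const
  · intro y V hyV hV
    obtain ⟨s, h1, h2⟩ := sep_compact h hh hsep C y Vᶜ hV.isClosed_compl.isCompact (by simpa using hyV)
    refine ⟨_, ⟨s, rfl⟩, ?_, ?_⟩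
    · show Tm.ev h s y.1 < 0
      linarith
    · intro z hz
      by_contra hzV
      have := h2 z hzV
      have hz' : Tm.ev h s z.1 < 0 := hz
      linarith

theorem base_functions {X : Type u} [TopologicalSpace X] [CompactSpace X] [T2Space X]
    (B : Set (Set X)) (hB : TopologicalSpace.IsTopologicalBasis B) :
    ∃ h : B × B → X → ℝ, (∀ a, Continuous (h a)) ∧ ∀ x y, x ≠ y → ∃ a, h a x ≠ h a y := by
  have : ∀ a : B × B, ∃ g : C(X, ℝ), (∃ g : C(X, ℝ), EqOn g 0 a.1.1 ∧ EqOn g 1 a.2.1ᶜ) →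
      EqOn g 0 a.1.1 ∧ EqOn g 1 a.2.1ᶜ := by
    intro a
    by_cases hg : ∃ g : C(X, ℝ), EqOn g 0 a.1.1 ∧ EqOn g 1 a.2.1ᶜ
    · obtain ⟨g, hg⟩ := hg
      exact ⟨g, fun _ => hg⟩
    · exact ⟨0, fun h => absurd h hg⟩
  choose g hg using this
  refine ⟨fun a => g a, fun a => (g a).continuous, ?_⟩
  intro x y hxy
  obtain ⟨V, hVB, hxV, hV⟩ := hB.exists_subset_of_mem_open (show x ∈ ({y}ᶜ : Set X) from hxy)
    isOpen_compl_singleton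
  obtain ⟨U, hUB, hxU, hU⟩ := hB.exists_closure_subset ((hB.isOpen hVB).mem_nhds hxV)
  have hex : ∃ g : C(X, ℝ), EqOn g 0 U ∧ EqOn g 1 Vᶜ := by
    obtain ⟨g, h0, h1, -⟩ := exists_continuous_zero_one_of_isClosed (isClosed_closure (s := U))
      (hB.isOpen hVB).isClosed_compl (disjoint_compl_right_iff_subset.2 hU)
    exact ⟨g, h0.mono subset_closure, h1⟩
  obtain ⟨h0, h1⟩ := hg (⟨U, hUB⟩, ⟨V, hVB⟩) hex
  refine ⟨(⟨U, hUB⟩, ⟨V, hVB⟩), ?_⟩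
  have e0 := h0 hxU
  have e1 := h1 (show y ∈ Vᶜ from fun hy => hV hy rfl)
  simp only [Pi.zero_apply, Pi.one_apply] at e0 e1
  show g _ x ≠ g _ y
  rw [e0, e1]; norm_num

/-- Every continuum of weight at most `κ` is the weakly confluent image of a
hereditarily indecomposable continuum of weight at most `κ`. -/
theorem continuum_weakly_confluent_image_of_HI_same_weight
    (κ : Cardinal.{u}) (hκ : Cardinal.aleph0 ≤ κ)
    (X : Type u) [TopologicalSpace X] [CompactSpace X] [T2Space X]
    [ConnectedSpace X] [Nonempty X]
    (hw : ∃ B : Set (Set X), TopologicalSpace.IsTopologicalBasis B ∧ Cardinal.mk B ≤ κ) :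
    ∃ (Y : Type u) (tY : TopologicalSpace Y),
      @CompactSpace Y tY ∧ @T2Space Y tY ∧ @ConnectedSpace Y tY ∧ Nonempty Y ∧
      @HereditarilyIndecomposable Y tY ∧
      (∃ B : Set (Set Y), @TopologicalSpace.IsTopologicalBasis Y tY B ∧
        Cardinal.mk B ≤ κ) ∧
      ∃ f : Y → X, @Continuous Y X tY _ f ∧ Surjective f ∧
        @WeaklyConfluent Y X tY _ f := by
  obtain ⟨B, hB, hBκ⟩ := hw
  obtain ⟨h, hh, hsep⟩ := base_functions B hB
  have hA : Cardinal.mk (B × B) ≤ κ := by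
    rw [Cardinal.mk_prod]; simp only [Cardinal.lift_id]
    exact (mul_le_mul' hBκ hBκ).trans (Cardinal.mul_eq_self hκ).le
  obtain ⟨C, hCk, hCc, hCe, hCK⟩ := total_stage h hh
  have hlift : ∀ K : Set X, IsClosed K → IsConnected K →
      ∃ L : Set C, IsClosed L ∧ IsConnected L ∧ (fun c : C => c.1.1) '' L = K := by
    intro K hK hKc
    obtain ⟨K1, hK1C, hK1k, hK1c, rfl⟩ := hCK K hK hKc
    have him : Subtype.val '' (Subtype.val ⁻¹' K1 : Set C) = K1 := by
      rw [Subtype.image_preimage_coe, inter_eq_right.2 hK1C]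
    refine ⟨Subtype.val ⁻¹' K1, hK1k.preimage continuous_subtype_val, ⟨?_, ?_⟩, ?_⟩
    · obtain ⟨k, hk⟩ := hK1c.nonempty
      exact ⟨⟨k, hK1C hk⟩, hk⟩
    · rw [← Topology.IsInducing.subtypeVal.isPreconnected_image, him]
      exact hK1c.isPreconnected
    · conv_rhs => rw [← him]
      rw [image_image]
  refine ⟨C, inferInstance, isCompact_iff_compactSpace.mp hCk, inferInstance,
    isConnected_iff_connectedSpace.1 hCc, hCc.nonempty.to_subtype,
    total_HI h hh hsep C hCk hCe, total_basis h hh hsep C hCk hκ hA,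
    fun c => c.1.1, by fun_prop, ?_, hlift⟩
  intro x
  obtain ⟨L, -, -, hL⟩ := hlift univ isClosed_univ isConnected_univ
  have hx : x ∈ (fun c : C => c.1.1) '' L := by rw [hL]; trivial
  obtain ⟨c, -, hc⟩ := hx
  exact ⟨c, hc⟩
end
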